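/- arXiv:2412.00018 — 3 statements merged into one kernel-verified Lean document; each statement's English description precedes it below -/
import Mathlib

section
/- Let A := {a ∈ C*_r(G) : j(a)(γ) = 0 for all γ ∈ G ∖ Ii} (a subset of C*_r(G)), and for x ∈ G⁽⁰⁾ let J_x := the norm closure of {a·d : a ∈ A, d ∈ C₀(G⁽⁰⁾), d(x) = 0}, where C₀(G⁽⁰⁾) is regarded as a subalgebra of C*_r(G). Then for every x ∈ G⁽⁰⁾, every a ∈ A satisfying j(a)(γ) = 0 for all γ ∈ Ii x belongs to J_x. -/
/-- A locally compact Hausdorff étale groupoid, modelled as a type `G` with a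
partially defined multiplication (encoded by a total function, meaningful on
composable pairs), inversion, and source and range maps into the unit space. -/
structure EtaleGroupoid (G : Type*) [TopologicalSpace G] where
  src : G → G
  rng : G → G
  mul : G → G → G
  inv : G → G
  src_src : ∀ γ, src (src γ) = src γ
  rng_src : ∀ γ, rng (src γ) = src γ
  src_rng : ∀ γ, src (rng γ) = rng γ
  rng_rng : ∀ γ, rng (rng γ) = rng γ
  mul_assoc' : ∀ a b c, src a = rng b → src b = rng c →
      mul (mul a b) c = mul a (mul b c)
  src_mul : ∀ a b, src a = rng b → src (mul a b) = src b
  rng_mul : ∀ a b, src a = rng b → rng (mul a b) = rng a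
  mul_src_self : ∀ a, mul a (src a) = a
  rng_self_mul : ∀ a, mul (rng a) a = a
  src_inv : ∀ a, src (inv a) = rng a
  rng_inv : ∀ a, rng (inv a) = src a
  inv_mul_self : ∀ a, mul (inv a) a = src a
  mul_inv_self : ∀ a, mul a (inv a) = rng a
  continuous_src : Continuous src
  continuous_rng : Continuous rng
  continuous_inv : Continuous inv
  continuous_mul : Continuous fun p : {p : G × G // src p.1 = rng p.2} => mul p.1.1 p.1.2
  isOpen_unitSpace : IsOpen {x | src x = x}
  etale : ∀ γ, ∃ U : Set G, IsOpen U ∧ γ ∈ U ∧ Set.InjOn src U ∧ IsOpen (src '' U)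

namespace EtaleGroupoid

variable {G : Type*} [TopologicalSpace G] (E : EtaleGroupoid G)

/-- The unit space `G⁽⁰⁾`. -/
def unitSpace : Set G := {x | E.src x = x}

/-- `Gx = s⁻¹(x)`. -/
def Gx (x : G) : Set G := {γ | E.src γ = x}

/-- `xG = r⁻¹(x)`. -/
def xG (x : G) : Set G := {γ | E.rng γ = x}

/-- The isotropy `Iso(G) = ⋃ₓ (xG ∩ Gx)`. -/
def Iso : Set G := {γ | E.src γ = E.rng γ}

/-- `Ii = Iso(G)°`, the interior of the isotropy. -/
def Ii : Set G := interior E.Iso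

/-- `Iicl`, the closure of `Ii` in `G`. -/
def Iicl : Set G := closure E.Ii

/-- `Ii` is abelian: elements of `Ii` with the same source commute. -/
def IsAbelianIi : Prop :=
  ∀ a ∈ E.Ii, ∀ b ∈ E.Ii, E.src a = E.src b → E.mul a b = E.mul b a

/-- An open bisection: an open set on which both `src` and `rng` are injective. -/
def IsOpenBisection (B : Set G) : Prop :=
  IsOpen B ∧ Set.InjOn E.src B ∧ Set.InjOn E.rng B

/-- The set product `CD = {γδ : γ ∈ C, δ ∈ D, s(γ) = r(δ)}`. -/
def setMul (C D : Set G) : Set G :=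
  {g | ∃ c ∈ C, ∃ d ∈ D, E.src c = E.rng d ∧ g = E.mul c d}

/-- Natural-number set powers, with the convention `C⁰ = s(C)`. -/
def npowSet (C : Set G) : ℕ → Set G
  | 0 => E.src '' C
  | 1 => C
  | n + 2 => E.setMul (npowSet C (n + 1)) C

/-- Integer set powers: `C^(-m) = (C⁻¹)^m`. -/
def zpowSet (C : Set G) (m : ℤ) : Set G :=
  if 0 ≤ m then E.npowSet C m.toNat else E.npowSet (E.inv '' C) (-m).toNat

/-- Natural-number powers of an element, with `γ⁰ = s(γ)`. -/
def npow (γ : G) : ℕ → G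
  | 0 => E.src γ
  | n + 1 => E.mul (npow γ n) γ

/-- Integer powers of an element. -/
def zpow (γ : G) (m : ℤ) : G :=
  if 0 ≤ m then E.npow γ m.toNat else E.npow (E.inv γ) (-m).toNat

/-- The product of the sets `F i` over a list `l` of indices, multiplied on the
right by the set `T`. -/
def listSetProd {ι : Type*} (l : List ι) (F : ι → Set G) (T : Set G) : Set G :=
  l.foldr (fun i P => E.setMul (F i) P) T

/-- The product of the elements `f i` over a list `l` of indices, multiplied on the
right by `x`. -/
def listProd {ι : Type*} (l : List ι) (f : ι → G) (x : G) : G :=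
  l.foldr (fun i p => E.mul (f i) p) x

/-- `H` is a subgroup of the isotropy group `Iso(G)x = xG ∩ Gx` at the unit `x`. -/
def IsSubgroupAt (x : G) (H : Set G) : Prop :=
  (∀ a ∈ H, E.src a = x ∧ E.rng a = x) ∧ x ∈ H ∧
    (∀ a ∈ H, ∀ b ∈ H, E.mul a b ∈ H) ∧ ∀ a ∈ H, E.inv a ∈ H

/-- The subgroup of `Iso(G)x` generated by `gens`. -/
def subgroupClosureAt (x : G) (gens : Set G) : Set G :=
  ⋂₀ {H : Set G | E.IsSubgroupAt x H ∧ gens ⊆ H}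

/-- `q` restricts to a group homomorphism from the subgroup `H` of `Iso(G)x`
into the group `T` (a subgroup of the isotropy group at `y`). -/
def IsGroupHomOn (x y : G) (H : Set G) (T : Set G) (q : G → G) : Prop :=
  (∀ a ∈ H, q a ∈ T) ∧ q x = y ∧
    ∀ a ∈ H, ∀ b ∈ H, q (E.mul a b) = E.mul (q a) (q b)

end EtaleGroupoid

namespace GroupAlgebraL2

open MonoidAlgebra Filter Topology

section

variable {Γ : Type*}

/-- The finitely supported vector of `ℓ²(Γ)` attached to an element of `ℂ[Γ]`. -/
noncomputable def vec : MonoidAlgebra ℂ Γ →+ lp (fun _ : Γ => ℂ) 2 where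
  toFun p := Finsupp.linearCombination ℂ
    (fun g => (haveI := Classical.decEq Γ; lp.single 2 g (1 : ℂ) : lp (fun _ : Γ => ℂ) 2)) p.coeff
  map_zero' := by simp
  map_add' p q := by simp

theorem orthonormal_single {ι : Type*} [DecidableEq ι] :
    Orthonormal ℂ (fun i : ι => (lp.single 2 i (1 : ℂ) : lp (fun _ : ι => ℂ) 2)) := by
  rw [orthonormal_iff_ite]
  intro i j
  rw [lp.inner_single_left]
  simp [Pi.single_apply]

theorem vec_single [DecidableEq Γ] (g : Γ) (c : ℂ) :
    vec (single g c) = c • (lp.single 2 g (1 : ℂ) : lp (fun _ : Γ => ℂ) 2) := by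
  simp only [vec, AddMonoidHom.coe_mk, ZeroHom.coe_mk, coeff_single,
    Finsupp.linearCombination_single]
  congr!

theorem norm_sq_linearCombination {ι H : Type*} [NormedAddCommGroup H] [InnerProductSpace ℂ H]
    {v : ι → H} (hv : Orthonormal ℂ v) (p : ι →₀ ℂ) :
    ‖Finsupp.linearCombination ℂ v p‖ ^ 2 = ∑ i ∈ p.support, ‖p i‖ ^ 2 := by
  have := hv.inner_finsupp_eq_sum_left p p
  rw [inner_self_eq_norm_sq_to_K] at this
  have h2 : ((‖Finsupp.linearCombination ℂ v p‖ ^ 2 : ℝ) : ℂ)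
      = ((∑ i ∈ p.support, ‖p i‖ ^ 2 : ℝ) : ℂ) := by
    push_cast
    rw [← Complex.coe_algebraMap]
    refine this.trans ?_
    simp [Finsupp.sum, Complex.conj_mul']
  exact_mod_cast h2

theorem norm_vec_sq (p : MonoidAlgebra ℂ Γ) :
    ‖vec p‖ ^ 2 = ∑ i ∈ p.coeff.support, ‖p.coeff i‖ ^ 2 := by
  classical
  exact norm_sq_linearCombination orthonormal_single _

/-- The `ℓ¹`-norm on the group algebra. -/
noncomputable def l1 (f : MonoidAlgebra ℂ Γ) : ℝ := ∑ g ∈ f.coeff.support, ‖f.coeff g‖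

theorem sum_single_coeff (f : MonoidAlgebra ℂ Γ) :
    ∑ g ∈ f.coeff.support, single g (f.coeff g) = f := by
  exact MonoidAlgebra.sum_coeff_single f

theorem l1_sq_le (f : MonoidAlgebra ℂ Γ) :
    l1 f ^ 2 ≤ f.coeff.support.card * ‖vec f‖ ^ 2 := by
  rw [norm_vec_sq]
  exact sq_sum_le_card_mul_sum_sq

end

section

variable {Γ : Type*} [CommGroup Γ]

/-- The involution of the group algebra of an abelian group. -/
noncomputable def dag : MonoidAlgebra ℂ Γ →+* MonoidAlgebra ℂ Γ :=
  (mapDomainRingHom ℂ (invMonoidHom : Γ →* Γ)).comp (mapRingHom Γ (starRingEnd ℂ))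

@[simp] theorem dag_single (g : Γ) (c : ℂ) :
    dag (single g c) = single g⁻¹ (starRingEnd ℂ c) := by
  simp [dag]

theorem dag_dag (f : MonoidAlgebra ℂ Γ) : dag (dag f) = f := by
  induction f using MonoidAlgebra.induction_linear with
  | zero => simp
  | add p q hp hq => simp [hp, hq]
  | single h c => simp

open scoped InnerProductSpace in
theorem inner_vec_mul (f p q : MonoidAlgebra ℂ Γ) :
    ⟪vec (f * p), vec q⟫_ℂ = ⟪vec p, vec (dag f * q)⟫_ℂ := by
  classical
  induction f using MonoidAlgebra.induction_linear with
  | zero => simp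
  | add f f' hf hf' => simp only [add_mul, map_add, inner_add_left, inner_add_right, hf, hf']
  | single h c =>
    induction p using MonoidAlgebra.induction_linear with
    | zero => simp
    | add f f' hf hf' => simp only [mul_add, map_add, inner_add_left, hf, hf']
    | single h' c' =>
      induction q using MonoidAlgebra.induction_linear with
      | zero => simp
      | add f f' hf hf' => simp only [mul_add, map_add, inner_add_right, hf, hf']
      | single h'' c'' =>
        simp only [dag_single, single_mul_single, vec_single, inner_smul_left, inner_smul_right,
          lp.inner_single_left, lp.single_apply, Pi.single_apply, eq_inv_mul_iff_mul_eq]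
        split_ifs <;> simp; ring

theorem norm_vec_dag_mul (f p : MonoidAlgebra ℂ Γ) : ‖vec (dag f * p)‖ = ‖vec (f * p)‖ := by
  have h : inner ℂ (vec (dag f * p)) (vec (dag f * p)) = inner ℂ (vec (f * p)) (vec (f * p)) := by
    rw [inner_vec_mul, inner_vec_mul, dag_dag, mul_left_comm]
  rw [inner_self_eq_norm_sq_to_K, inner_self_eq_norm_sq_to_K] at h
  have h2 : ‖vec (dag f * p)‖ ^ 2 = ‖vec (f * p)‖ ^ 2 := by exact_mod_cast h
  exact (sq_eq_sq₀ (norm_nonneg _) (norm_nonneg _)).1 h2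

theorem norm_vec_mul_sq_le (f p : MonoidAlgebra ℂ Γ) :
    ‖vec (f * p)‖ ^ 2 ≤ ‖vec p‖ * ‖vec (dag f * f * p)‖ := by
  have h : inner ℂ (vec (f * p)) (vec (f * p)) = inner ℂ (vec p) (vec (dag f * f * p)) := by
    rw [inner_vec_mul, mul_assoc]
  have h2 := norm_inner_le_norm (𝕜 := ℂ) (vec p) (vec (dag f * f * p))
  rw [← h, inner_self_eq_norm_sq_to_K] at h2
  simpa using h2

theorem norm_vec_single_mul (g : Γ) (c : ℂ) (p : MonoidAlgebra ℂ Γ) :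
    ‖vec (single g c * p)‖ = ‖c‖ * ‖vec p‖ := by
  have key : ∀ g : Γ, ‖vec (single g (1 : ℂ) * p)‖ ^ 2 = ‖vec p‖ ^ 2 := by
    intro g
    have h : inner ℂ (vec (single g (1 : ℂ) * p)) (vec (single g (1 : ℂ) * p))
        = inner ℂ (vec p) (vec p) := by
      rw [inner_vec_mul, dag_single, ← mul_assoc, single_mul_single]
      simp [← one_def]
    rw [inner_self_eq_norm_sq_to_K, inner_self_eq_norm_sq_to_K] at h
    exact_mod_cast h
  have h1 : single g c * p = single 1 c * (single g (1 : ℂ) * p) := by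
    rw [← mul_assoc, single_mul_single]; simp
  have h2 : ∀ p : MonoidAlgebra ℂ Γ, vec (single 1 c * p) = c • vec p := by
    intro p
    classical
    induction p using MonoidAlgebra.induction_linear with
    | zero => simp
    | add f f' hf hf' => simp [mul_add, hf, hf']
    | single h c' => simp [vec_single, single_mul_single, mul_smul]
  rw [h1, h2, norm_smul, (sq_eq_sq₀ (norm_nonneg _) (norm_nonneg _)).1 (key g)]

theorem norm_vec_sum_single_mul_le {κ : Type*} (s : Finset κ) (u : κ → Γ) (c : κ → ℂ)
    (p : MonoidAlgebra ℂ Γ) :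
    ‖vec ((∑ k ∈ s, single (u k) (c k)) * p)‖ ≤ (∑ k ∈ s, ‖c k‖) * ‖vec p‖ := by
  rw [Finset.sum_mul, map_sum, Finset.sum_mul]
  refine (norm_sum_le _ _).trans (Finset.sum_le_sum fun k _ => ?_)
  rw [norm_vec_single_mul]

theorem card_support_pow_le (f : MonoidAlgebra ℂ Γ) (n : ℕ) :
    (f ^ n).coeff.support.card ≤ (n + 1) ^ f.coeff.support.card := by
  classical
  set S := f.coeff.support with hS
  have key : ∀ n : ℕ, ∀ g ∈ (f ^ n).coeff.support,
      ∃ m : S → ℕ, (∀ s, m s ≤ n) ∧ g = ∏ s : S, (s : Γ) ^ m s := by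
    intro n
    induction n with
    | zero =>
      intro g hg
      refine ⟨fun _ => 0, by simp, ?_⟩
      rw [pow_zero, one_def, coeff_single] at hg
      simpa using (Finsupp.support_single_subset hg)
    | succ n ih =>
      intro g hg
      rw [pow_succ] at hg
      obtain ⟨a, ha, b, hb, rfl⟩ := Finset.mem_mul.1 (MonoidAlgebra.support_coeff_mul_subset _ _ hg)
      obtain ⟨m, hm, rfl⟩ := ih a ha
      refine ⟨fun s => m s + if s = ⟨b, hb⟩ then 1 else 0, fun s => ?_, ?_⟩
      · have := hm s
        dsimp only
        split_ifs <;> omega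
      · simp only [pow_add, Finset.prod_mul_distrib, pow_ite, pow_one, pow_zero]
        rw [Finset.prod_ite_eq' Finset.univ, if_pos (Finset.mem_univ _)]
  have hsub : (f ^ n).coeff.support ⊆ Finset.univ.image
      (fun m : S → Fin (n + 1) => ∏ s : S, (s : Γ) ^ (m s : ℕ)) := by
    intro g hg
    obtain ⟨m, hm, rfl⟩ := key n g hg
    exact Finset.mem_image.2 ⟨fun s => ⟨m s, Nat.lt_succ_of_le (hm s)⟩, Finset.mem_univ _, rfl⟩
  refine (Finset.card_le_card hsub).trans (Finset.card_image_le.trans ?_)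
  simp

end

section

variable {Γ ι : Type*} [CommGroup Γ] {Λ : ι → Type*} [∀ i, CommGroup (Λ i)]
  {U : Filter ι} {q : ∀ i, Γ → Λ i}

theorem eventually_mapDomain_mul (hq : ∀ g h, ∀ᶠ i in U, q i (g * h) = q i g * q i h)
    (f k : MonoidAlgebra ℂ Γ) :
    ∀ᶠ i in U, mapDomain (q i) (f * k) = mapDomain (q i) f * mapDomain (q i) k := by
  induction f using MonoidAlgebra.induction_linear with
  | zero => simp
  | add f f' hf hf' =>
    filter_upwards [hf, hf'] with i h h'
    simp [add_mul, h, h', mapDomain_add]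
  | single g c =>
    induction k using MonoidAlgebra.induction_linear with
    | zero => simp
    | add f f' hf hf' =>
      filter_upwards [hf, hf'] with i h h'
      simp [mul_add, h, h', mapDomain_add]
    | single g' c' =>
      filter_upwards [hq g g'] with i h
      simp [single_mul_single, mapDomain_single, h]

theorem eventually_map_inv (hq : ∀ g h, ∀ᶠ i in U, q i (g * h) = q i g * q i h) (g : Γ) :
    ∀ᶠ i in U, q i g⁻¹ = (q i g)⁻¹ := by
  filter_upwards [hq 1 1, hq g g⁻¹] with i h1 h2
  have h3 : q i 1 = 1 := by simpa using h1
  rw [mul_inv_cancel, h3] at h2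
  exact eq_inv_of_mul_eq_one_right h2.symm

theorem eventually_mapDomain_dag (hq : ∀ g h, ∀ᶠ i in U, q i (g * h) = q i g * q i h)
    (f : MonoidAlgebra ℂ Γ) :
    ∀ᶠ i in U, mapDomain (q i) (dag f) = dag (mapDomain (q i) f) := by
  induction f using MonoidAlgebra.induction_linear with
  | zero => simp
  | add f f' hf hf' =>
    filter_upwards [hf, hf'] with i h h'
    simp [h, h', mapDomain_add]
  | single g c =>
    filter_upwards [eventually_map_inv hq g] with i h
    simp [mapDomain_single, h]

theorem frequently_dag_mul (hq : ∀ g h, ∀ᶠ i in U, q i (g * h) = q i g * q i h)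
    {f : MonoidAlgebra ℂ Γ} {t : ℝ} (ht : 0 ≤ t)
    (h : ∃ᶠ i in U, ∃ p, t * ‖vec p‖ < ‖vec (mapDomain (q i) f * p)‖) :
    ∃ᶠ i in U, ∃ p, t ^ 2 * ‖vec p‖ < ‖vec (mapDomain (q i) (dag f * f) * p)‖ := by
  refine (h.and_eventually
    ((eventually_mapDomain_mul hq (dag f) f).and (eventually_mapDomain_dag hq f))).mono ?_
  rintro i ⟨⟨p, hp⟩, h1, h2⟩
  refine ⟨p, ?_⟩
  rw [h1, h2]
  have h3 := norm_vec_mul_sq_le (mapDomain (q i) f) p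
  have h4 : (t * ‖vec p‖) ^ 2 < ‖vec (mapDomain (q i) f * p)‖ ^ 2 :=
    pow_lt_pow_left₀ hp (by positivity) two_ne_zero
  refine lt_of_mul_lt_mul_left (lt_of_lt_of_le ?_ h3) (norm_nonneg _)
  calc _ = (t * ‖vec p‖) ^ 2 := by ring
    _ < _ := h4

theorem lt_l1_of_frequently {Γ : Type*} {q : ∀ i, Γ → Λ i} {f : MonoidAlgebra ℂ Γ} {t : ℝ}
    (h : ∃ᶠ i in U, ∃ p, t * ‖vec p‖ < ‖vec (mapDomain (q i) f * p)‖) : t < l1 f := by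
  obtain ⟨i, p, hp⟩ := h.exists
  have h1 : mapDomain (q i) f = ∑ g ∈ f.coeff.support, single (q i g) (f.coeff g) := by
    conv_lhs => rw [← sum_single_coeff f]
    change mapDomainLinearMap ℂ ℂ (q i) _ = _
    simp
  rw [h1] at hp
  exact lt_of_mul_lt_mul_right (hp.trans_le (norm_vec_sum_single_mul_le _ _ _ p)) (norm_nonneg _)

/-- Asymptotically multiplicative maps out of an abelian group do not increase the reduced norm
in the limit. -/
theorem eventually_norm_vec_mapDomain_mul_le
    (hq : ∀ g h, ∀ᶠ i in U, q i (g * h) = q i g * q i h)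
    {f : MonoidAlgebra ℂ Γ} {C t : ℝ} (hC : 0 < C) (hCt : C < t)
    (hf : ∀ p, ‖vec (f * p)‖ ≤ C * ‖vec p‖) :
    ∀ᶠ i in U, ∀ p, ‖vec (mapDomain (q i) f * p)‖ ≤ t * ‖vec p‖ := by
  by_contra hcon
  have h0 : ∃ᶠ i in U, ∃ p, t * ‖vec p‖ < ‖vec (mapDomain (q i) f * p)‖ := by
    simpa only [not_eventually, not_forall, not_le] using hcon
  have ht : 0 < t := hC.trans hCt
  have hself : ∀ n : ℕ, dag ((dag f * f) ^ n) = (dag f * f) ^ n := by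
    intro n; rw [map_pow, map_mul, dag_dag, mul_comm]
  have hfreq : ∀ m : ℕ, ∃ᶠ i in U, ∃ p,
      t ^ (2 * 2 ^ m) * ‖vec p‖ < ‖vec (mapDomain (q i) ((dag f * f) ^ 2 ^ m) * p)‖ := by
    intro m
    induction m with
    | zero => simpa using frequently_dag_mul hq ht.le h0
    | succ m ih =>
      have := frequently_dag_mul hq (by positivity) ih
      rw [hself, ← pow_two, ← pow_mul, ← pow_mul, mul_assoc, ← pow_succ] at this
      exact this
  have hpow : ∀ n : ℕ, ‖vec ((dag f * f) ^ n)‖ ≤ C ^ (2 * n) := by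
    intro n
    induction n with
    | zero =>
      classical
      simp [one_def, vec_single, lp.norm_single]
    | succ n ih =>
      rw [pow_succ', mul_assoc, norm_vec_dag_mul]
      calc _ ≤ C * ‖vec (f * (dag f * f) ^ n)‖ := hf _
        _ ≤ C * (C * C ^ (2 * n)) := by gcongr; exact (hf _).trans (by gcongr)
        _ = _ := by ring
  set s := (dag f * f).coeff.support.card with hs
  have hmain : ∀ m : ℕ, t ^ (4 * 2 ^ m) ≤ ((2 ^ m : ℕ) + 1 : ℝ) ^ s * C ^ (4 * 2 ^ m) := by
    intro m
    have h1 := lt_l1_of_frequently (hfreq m)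
    have h2 := l1_sq_le ((dag f * f) ^ 2 ^ m)
    have h3 : (((dag f * f) ^ 2 ^ m).coeff.support.card : ℝ) ≤ ((2 ^ m : ℕ) + 1 : ℝ) ^ s := by
      exact_mod_cast card_support_pow_le (dag f * f) (2 ^ m)
    calc t ^ (4 * 2 ^ m) = (t ^ (2 * 2 ^ m)) ^ 2 := by rw [← pow_mul]; congr 1; ring
      _ ≤ l1 ((dag f * f) ^ 2 ^ m) ^ 2 := by gcongr
      _ ≤ _ := h2
      _ ≤ ((2 ^ m : ℕ) + 1 : ℝ) ^ s * (C ^ (2 * 2 ^ m)) ^ 2 := by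
        gcongr
        exact hpow _
      _ = _ := by rw [← pow_mul]; congr 2; ring
  set r := (C / t) ^ 4 with hr
  have hr0 : 0 < r := by positivity
  have hr1 : r < 1 := pow_lt_one₀ (by positivity) ((div_lt_one ht).2 hCt) (by norm_num)
  have hlim := tendsto_pow_const_mul_const_pow_of_abs_lt_one s
    (by rwa [abs_of_pos hr0] : |r| < 1)
  have hlim2 := hlim.comp ((tendsto_add_atTop_nat 1).comp
    (tendsto_pow_atTop_atTop_of_one_lt (one_lt_two : (1 : ℕ) < 2)))
  obtain ⟨m, hm⟩ := (hlim2.eventually_lt_const hr0).exists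
  simp only [Function.comp_apply] at hm
  have h4 := hmain m
  have h5 : r ^ 2 ^ m * t ^ (4 * 2 ^ m) = C ^ (4 * 2 ^ m) := by
    rw [hr, ← pow_mul, ← mul_pow, div_mul_cancel₀ _ ht.ne']
  rw [← h5, ← mul_assoc] at h4
  have h6 : 1 ≤ ((2 ^ m : ℕ) + 1 : ℝ) ^ s * r ^ 2 ^ m :=
    le_of_mul_le_mul_right (by simpa using h4) (by positivity : 0 < t ^ (4 * 2 ^ m))
  have h7 : ((2 ^ m + 1 : ℕ) : ℝ) ^ s * r ^ (2 ^ m + 1)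
      = r * (((2 ^ m : ℕ) + 1 : ℝ) ^ s * r ^ 2 ^ m) := by
    push_cast; ring
  rw [h7] at hm
  nlinarith

end

end GroupAlgebraL2

namespace EtaleGroupoid

open Filter Topology

variable {G : Type*} [TopologicalSpace G] (E : EtaleGroupoid G)

section Algebra

theorem mul_mul_inv_cancel {u η : G} (h : E.src u = E.rng η) :
    E.mul (E.mul u η) (E.inv η) = u := by
  rw [E.mul_assoc' _ _ _ h (E.rng_inv η).symm, E.mul_inv_self, ← h, E.mul_src_self]

theorem mul_inv_mul_cancel {γ η : G} (h : E.src γ = E.src η) :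
    E.mul (E.mul γ (E.inv η)) η = γ := by
  rw [E.mul_assoc' _ _ _ (h.trans (E.rng_inv η).symm) (E.src_inv η), E.inv_mul_self, ← h,
    E.mul_src_self]

theorem inv_mul_mul_cancel {u η : G} (h : E.src u = E.rng η) :
    E.mul (E.inv u) (E.mul u η) = η := by
  rw [← E.mul_assoc' _ _ _ (E.src_inv u) h, E.inv_mul_self, h, E.rng_self_mul]

theorem src_mul_inv {γ η : G} (h : E.src γ = E.src η) :
    E.src (E.mul γ (E.inv η)) = E.rng η := by
  rw [E.src_mul _ _ (h.trans (E.rng_inv η).symm), E.src_inv]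

theorem rng_of_mem_unitSpace {x : G} (hx : x ∈ E.unitSpace) : E.rng x = x := by
  have h : E.src x = x := hx
  rw [← h, E.rng_src]

theorem src_mem_unitSpace (γ : G) : E.src γ ∈ E.unitSpace := E.src_src γ

theorem rng_mem_unitSpace (γ : G) : E.rng γ ∈ E.unitSpace := E.src_rng γ

theorem inv_of_mem_unitSpace {x : G} (hx : x ∈ E.unitSpace) : E.inv x = x := by
  have h1 := E.rng_self_mul (E.inv x)
  have h : E.src x = x := hx
  have h2 := E.mul_inv_self x
  rw [E.rng_inv, h] at h1
  rw [← h1, h2, E.rng_of_mem_unitSpace hx]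

theorem inv_inv' (γ : G) : E.inv (E.inv γ) = γ := by
  have h := E.inv_mul_mul_cancel (u := E.inv γ) (η := γ) (E.src_inv γ)
  rwa [E.inv_mul_self, ← E.rng_inv, ← E.src_inv, E.mul_src_self] at h

end Algebra

section Topology

theorem eventuallyEq_of_tendsto {ι : Type*} {l : Filter ι} {u v : ι → G} {γ : G}
    (hu : Tendsto u l (𝓝 γ)) (hv : Tendsto v l (𝓝 γ))
    (h : ∀ᶠ i in l, E.src (u i) = E.src (v i)) : ∀ᶠ i in l, u i = v i := by
  obtain ⟨O, hO, hγ, hinj, -⟩ := E.etale γ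
  filter_upwards [hu (hO.mem_nhds hγ), hv (hO.mem_nhds hγ), h] with i h1 h2 h3
  exact hinj h1 h2 h3

theorem tendsto_mul {ι : Type*} {l : Filter ι} {u v : ι → G} {γ δ : G}
    (hu : Tendsto u l (𝓝 γ)) (hv : Tendsto v l (𝓝 δ)) (hγδ : E.src γ = E.rng δ)
    (h : ∀ᶠ i in l, E.src (u i) = E.rng (v i)) :
    Tendsto (fun i => E.mul (u i) (v i)) l (𝓝 (E.mul γ δ)) := by
  have hc : ContinuousOn (fun p : G × G => E.mul p.1 p.2) {p | E.src p.1 = E.rng p.2} :=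
    continuousOn_iff_continuous_domRestrict.2 E.continuous_mul
  have hw := hc (γ, δ) hγδ
  exact hw.tendsto.comp (tendsto_nhdsWithin_iff.2 ⟨hu.prodMk_nhds hv, h⟩)

open Classical in
/-- A local section of the source map through `γ`. -/
noncomputable def sec (γ z : G) : G :=
  if h : ∃ u ∈ (E.etale γ).choose, E.src u = z then h.choose else γ

variable {E}

theorem eventually_src_sec (hopen : IsOpenMap E.src) (γ : G) :
    ∀ᶠ z in 𝓝 (E.src γ), E.src (E.sec γ z) = z := by
  obtain ⟨hO, hγ, hinj, -⟩ := (E.etale γ).choose_spec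
  filter_upwards [hopen.image_mem_nhds (hO.mem_nhds hγ)] with z hz
  have h : ∃ u ∈ (E.etale γ).choose, E.src u = z := hz
  rw [sec, dif_pos h]
  exact h.choose_spec.2

theorem tendsto_sec (hopen : IsOpenMap E.src) (γ : G) :
    Tendsto (E.sec γ) (𝓝 (E.src γ)) (𝓝 γ) := by
  obtain ⟨hO, hγ, hinj, -⟩ := (E.etale γ).choose_spec
  intro V hV
  rw [mem_map]
  filter_upwards [hopen.image_mem_nhds (inter_mem hV (hO.mem_nhds hγ))] with z hz
  obtain ⟨u, ⟨huV, huO⟩, rfl⟩ := hz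
  have h : ∃ v ∈ (E.etale γ).choose, E.src v = E.src u := ⟨u, huO, rfl⟩
  rw [Set.mem_preimage, sec, dif_pos h, hinj h.choose_spec.1 huO h.choose_spec.2]
  exact huV

theorem src_eq_rng_of_mem_Ii {γ : G} (h : γ ∈ E.Ii) : E.src γ = E.rng γ := by
  have h' : γ ∈ E.Iso := interior_subset h
  exact h'

theorem unitSpace_subset_Ii : E.unitSpace ⊆ E.Ii :=
  interior_maximal (fun x hx => by
    change E.src x = E.rng x
    rw [E.rng_of_mem_unitSpace hx]; exact hx) E.isOpen_unitSpace

theorem inv_mem_Ii {γ : G} (h : γ ∈ E.Ii) : E.inv γ ∈ E.Ii := by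
  have hsub : E.inv ⁻¹' E.Ii ⊆ E.Iso := by
    intro δ hδ
    have := src_eq_rng_of_mem_Ii (E := E) hδ
    rw [E.src_inv, E.rng_inv] at this
    exact this.symm
  have hop : IsOpen (E.inv ⁻¹' E.Ii) := isOpen_interior.preimage E.continuous_inv
  refine interior_maximal hsub hop ?_
  rwa [Set.mem_preimage, E.inv_inv']

theorem mul_mem_Ii (hopen : IsOpenMap E.src) {γ δ : G} (hγ : γ ∈ E.Ii) (hδ : δ ∈ E.Ii)
    (h : E.src γ = E.src δ) : E.mul γ δ ∈ E.Ii := by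
  have hγδ : E.src γ = E.rng δ := h.trans (src_eq_rng_of_mem_Ii hδ)
  have hs : Tendsto E.src (𝓝 (E.mul γ δ)) (𝓝 (E.src δ)) := by
    have := E.continuous_src.tendsto (E.mul γ δ)
    rwa [E.src_mul _ _ hγδ] at this
  have hs' : Tendsto E.src (𝓝 (E.mul γ δ)) (𝓝 (E.src γ)) := by rwa [h]
  have h1 := (tendsto_sec hopen γ).comp hs'
  have h2 := (tendsto_sec hopen δ).comp hs
  have e1 := hs'.eventually (eventually_src_sec hopen γ)
  have e2 := hs.eventually (eventually_src_sec hopen δ)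
  have m1 : ∀ᶠ ζ in 𝓝 (E.mul γ δ), E.sec γ (E.src ζ) ∈ E.Ii :=
    h1 (isOpen_interior.mem_nhds hγ)
  have m2 : ∀ᶠ ζ in 𝓝 (E.mul γ δ), E.sec δ (E.src ζ) ∈ E.Ii :=
    h2 (isOpen_interior.mem_nhds hδ)
  have hcomp : ∀ᶠ ζ in 𝓝 (E.mul γ δ),
      E.src (E.sec γ (E.src ζ)) = E.rng (E.sec δ (E.src ζ)) := by
    filter_upwards [e1, e2, m2] with ζ a b c
    rw [a, ← src_eq_rng_of_mem_Ii (E := E) c]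
    exact b.symm
  have h3 := E.tendsto_mul h1 h2 hγδ hcomp
  have h4 := E.eventuallyEq_of_tendsto (tendsto_id (x := 𝓝 (E.mul γ δ))) h3 (by
    filter_upwards [e2, hcomp] with ζ b c
    rw [Function.comp_apply, Function.comp_apply, E.src_mul _ _ c, b, id])
  refine mem_interior_iff_mem_nhds.2 ?_
  filter_upwards [h4, m1, e1, e2, hcomp] with ζ a b c d e
  change E.src ζ = E.rng ζ
  have a' : ζ = E.mul (E.sec γ (E.src ζ)) (E.sec δ (E.src ζ)) := a
  rw [a', E.src_mul _ _ e, E.rng_mul _ _ e, ← src_eq_rng_of_mem_Ii (E := E) b]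
  exact d.trans c.symm

end Topology

section Groups

variable {E}

/-- The fibre `Ii z`. -/
abbrev IiFibre (E : EtaleGroupoid G) (z : G) : Type _ := {γ : G // γ ∈ E.Ii ∧ E.src γ = z}

/-- `c` identifies the group `S` with a group of elements of the isotropy group at `z`. -/
structure IsIsotropyEmbedding (E : EtaleGroupoid G) (z : G) {S : Type*} [Mul S] (c : S → G) :
    Prop where
  inj : Function.Injective c
  src_eq : ∀ s, E.src (c s) = z
  rng_eq : ∀ s, E.rng (c s) = z
  map_mul : ∀ s t, c (s * t) = E.mul (c s) (c t)

/-- The abelian group structure on a set of isotropy elements at the unit `x`. -/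
abbrev commGroupOfIsotropy {x : G} (p : G → Prop) (hpx : p x)
    (hiso : ∀ γ, p γ → E.src γ = x ∧ E.rng γ = x)
    (hmul : ∀ γ δ, p γ → p δ → p (E.mul γ δ)) (hinv : ∀ γ, p γ → p (E.inv γ))
    (hcomm : ∀ γ δ, p γ → p δ → E.mul γ δ = E.mul δ γ) : CommGroup {γ : G // p γ} :=
  letI : Mul {γ : G // p γ} := ⟨fun a b => ⟨E.mul a.1 b.1, hmul _ _ a.2 b.2⟩⟩
  letI : Inv {γ : G // p γ} := ⟨fun a => ⟨E.inv a.1, hinv _ a.2⟩⟩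
  letI : One {γ : G // p γ} := ⟨⟨x, hpx⟩⟩
  { Group.ofLeftAxioms (G := {γ : G // p γ})
      (fun a b c => Subtype.ext (E.mul_assoc' _ _ _
        ((hiso _ a.2).1.trans (hiso _ b.2).2.symm) ((hiso _ b.2).1.trans (hiso _ c.2).2.symm)))
      (fun a => Subtype.ext (by
        have := E.rng_self_mul a.1
        rwa [(hiso _ a.2).2] at this))
      (fun a => Subtype.ext ((E.inv_mul_self a.1).trans (hiso _ a.2).1)) with
    mul_comm := fun a b => Subtype.ext (hcomm _ _ a.2 b.2) }

/-- The abelian group `Ii z`. -/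
abbrev iiCommGroup (hopen : IsOpenMap E.src) (hab : E.IsAbelianIi) (z : E.unitSpace) :
    CommGroup (E.IiFibre z) :=
  commGroupOfIsotropy (x := (z : G)) (fun γ => γ ∈ E.Ii ∧ E.src γ = z)
    ⟨unitSpace_subset_Ii z.2, z.2⟩
    (fun γ h => ⟨h.2, (src_eq_rng_of_mem_Ii h.1).symm.trans h.2⟩)
    (fun γ δ h h' => ⟨mul_mem_Ii hopen h.1 h'.1 (h.2.trans h'.2.symm), by
      rw [E.src_mul _ _ (h.2.trans (h'.2.symm.trans (src_eq_rng_of_mem_Ii h'.1))), h'.2]⟩)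
    (fun γ h => ⟨inv_mem_Ii h.1, by rw [E.src_inv, ← src_eq_rng_of_mem_Ii h.1, h.2]⟩)
    (fun γ δ h h' => hab _ h.1 _ h'.1 (h.2.trans h'.2.symm))

theorem isIsotropyEmbedding_iiFibre (hopen : IsOpenMap E.src) (hab : E.IsAbelianIi)
    (z : E.unitSpace) :
    letI := iiCommGroup hopen hab z
    E.IsIsotropyEmbedding z (fun s : E.IiFibre z => s.1) :=
  letI := iiCommGroup hopen hab z
  { inj := Subtype.val_injective
    src_eq := fun s => s.2.2
    rng_eq := fun s => (src_eq_rng_of_mem_Ii s.2.1).symm.trans s.2.2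
    map_mul := fun _ _ => rfl }

/-- The isotropy elements at `x` that are limits along `U` of elements of `Ii`. -/
def IsLimitIi (E : EtaleGroupoid G) (x : E.unitSpace) (U : Filter E.unitSpace) (h : G) : Prop :=
  E.src h = x ∧ E.rng h = x ∧ ∀ᶠ z : E.unitSpace in U, E.sec h z ∈ E.Ii

variable {x : E.unitSpace} {U : Filter E.unitSpace}

theorem tendsto_sec_val (hopen : IsOpenMap E.src) (hU : U ≤ 𝓝 x) {h : G} (hx : E.src h = x) :
    Tendsto (fun z : E.unitSpace => E.sec h z) U (𝓝 h) := by
  have h1 : Tendsto (fun z : E.unitSpace => (z : G)) U (𝓝 (E.src h)) := by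
    rw [hx]; exact (continuous_subtype_val.tendsto x).mono_left hU
  exact (tendsto_sec hopen h).comp h1

theorem eventually_src_sec_val (hopen : IsOpenMap E.src) (hU : U ≤ 𝓝 x) {h : G}
    (hx : E.src h = x) : ∀ᶠ z : E.unitSpace in U, E.src (E.sec h z) = z := by
  have h1 : Tendsto (fun z : E.unitSpace => (z : G)) U (𝓝 (E.src h)) := by
    rw [hx]; exact (continuous_subtype_val.tendsto x).mono_left hU
  exact h1.eventually (eventually_src_sec hopen h)

theorem IsLimitIi.eventually_composable (hopen : IsOpenMap E.src) (hU : U ≤ 𝓝 x) {h k : G}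
    (hh : E.IsLimitIi x U h) (hk : E.IsLimitIi x U k) :
    ∀ᶠ z : E.unitSpace in U, E.src (E.sec h z) = E.rng (E.sec k z) := by
  filter_upwards [eventually_src_sec_val hopen hU hh.1, eventually_src_sec_val hopen hU hk.1,
    hk.2.2] with z a b c
  rw [a, ← src_eq_rng_of_mem_Ii c, b]

theorem IsLimitIi.eventually_sec_mul (hopen : IsOpenMap E.src) (hU : U ≤ 𝓝 x) {h k : G}
    (hh : E.IsLimitIi x U h) (hk : E.IsLimitIi x U k) :
    ∀ᶠ z : E.unitSpace in U, E.sec (E.mul h k) z = E.mul (E.sec h z) (E.sec k z) := by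
  have hhk : E.src h = E.rng k := hh.1.trans hk.2.1.symm
  have hsrc : E.src (E.mul h k) = x := (E.src_mul _ _ hhk).trans hk.1
  have hc := hh.eventually_composable hopen hU hk
  refine E.eventuallyEq_of_tendsto (tendsto_sec_val hopen hU hsrc)
    (E.tendsto_mul (tendsto_sec_val hopen hU hh.1) (tendsto_sec_val hopen hU hk.1) hhk hc) ?_
  filter_upwards [hc, eventually_src_sec_val hopen hU hsrc,
    eventually_src_sec_val hopen hU hk.1] with z a b c
  rw [b, E.src_mul _ _ a, c]

theorem IsLimitIi.mul (hopen : IsOpenMap E.src) (hU : U ≤ 𝓝 x) {h k : G}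
    (hh : E.IsLimitIi x U h) (hk : E.IsLimitIi x U k) : E.IsLimitIi x U (E.mul h k) := by
  have hhk : E.src h = E.rng k := hh.1.trans hk.2.1.symm
  refine ⟨(E.src_mul _ _ hhk).trans hk.1, (E.rng_mul _ _ hhk).trans hh.2.1, ?_⟩
  filter_upwards [hh.eventually_sec_mul hopen hU hk, hh.2.2, hk.2.2,
    hh.eventually_composable hopen hU hk] with z a b c d
  rw [a]
  exact mul_mem_Ii hopen b c (d.trans (src_eq_rng_of_mem_Ii c).symm)

theorem IsLimitIi.inv (hopen : IsOpenMap E.src) (hU : U ≤ 𝓝 x) {h : G}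
    (hh : E.IsLimitIi x U h) : E.IsLimitIi x U (E.inv h) := by
  have hsrc : E.src (E.inv h) = x := (E.src_inv h).trans hh.2.1
  refine ⟨hsrc, (E.rng_inv h).trans hh.1, ?_⟩
  have h1 := E.eventuallyEq_of_tendsto (tendsto_sec_val hopen hU hsrc)
    ((E.continuous_inv.tendsto h).comp (tendsto_sec_val hopen hU hh.1)) (by
      filter_upwards [eventually_src_sec_val hopen hU hsrc,
        eventually_src_sec_val hopen hU hh.1, hh.2.2] with z a b c
      rw [a, Function.comp_apply, E.src_inv, ← src_eq_rng_of_mem_Ii c, b])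
  filter_upwards [h1, hh.2.2] with z a b
  rw [a]
  exact inv_mem_Ii b

theorem isLimitIi_unit (hopen : IsOpenMap E.src) (hU : U ≤ 𝓝 x) : E.IsLimitIi x U x := by
  refine ⟨x.2, E.rng_of_mem_unitSpace x.2, ?_⟩
  exact tendsto_sec_val hopen hU x.2
    (isOpen_interior.mem_nhds (unitSpace_subset_Ii x.2))

theorem IsLimitIi.mul_comm [T2Space G] [NeBot U] (hopen : IsOpenMap E.src) (hab : E.IsAbelianIi)
    (hU : U ≤ 𝓝 x) {h k : G} (hh : E.IsLimitIi x U h) (hk : E.IsLimitIi x U k) :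
    E.mul h k = E.mul k h := by
  have h1 := E.tendsto_mul (tendsto_sec_val hopen hU hh.1) (tendsto_sec_val hopen hU hk.1)
    (hh.1.trans hk.2.1.symm) (hh.eventually_composable hopen hU hk)
  have h2 := E.tendsto_mul (tendsto_sec_val hopen hU hk.1) (tendsto_sec_val hopen hU hh.1)
    (hk.1.trans hh.2.1.symm) (hk.eventually_composable hopen hU hh)
  refine tendsto_nhds_unique h1 (h2.congr' ?_)
  filter_upwards [hh.2.2, hk.2.2, hh.eventually_composable hopen hU hk] with z a b c
  exact (hab _ a _ b (c.trans (src_eq_rng_of_mem_Ii b).symm)).symm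

/-- The group of isotropy elements at `x` that are limits along `U` of elements of `Ii`. -/
abbrev LimitIi (E : EtaleGroupoid G) (x : E.unitSpace) (U : Filter E.unitSpace) : Type _ :=
  {h : G // E.IsLimitIi x U h}

/-- The limit group is abelian. -/
abbrev limitCommGroup [T2Space G] [NeBot U] (hopen : IsOpenMap E.src) (hab : E.IsAbelianIi)
    (hU : U ≤ 𝓝 x) : CommGroup (E.LimitIi x U) :=
  commGroupOfIsotropy (x := (x : G)) (E.IsLimitIi x U) (isLimitIi_unit hopen hU)
    (fun _ h => ⟨h.1, h.2.1⟩) (fun _ _ h k => h.mul hopen hU k) (fun _ h => h.inv hopen hU)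
    (fun _ _ h k => h.mul_comm hopen hab hU k)

theorem isIsotropyEmbedding_limitIi [T2Space G] [NeBot U] (hopen : IsOpenMap E.src)
    (hab : E.IsAbelianIi) (hU : U ≤ 𝓝 x) :
    letI := limitCommGroup hopen hab hU
    E.IsIsotropyEmbedding x (fun s : E.LimitIi x U => s.1) :=
  letI := limitCommGroup hopen hab hU
  { inj := Subtype.val_injective
    src_eq := fun s => s.2.1
    rng_eq := fun s => s.2.2.1
    map_mul := fun _ _ => rfl }

open Classical in
/-- The approximate transport of the limit group to the fibre `Ii z`. -/
noncomputable def transport (z : E.unitSpace) (h : E.LimitIi x U) : E.IiFibre z :=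
  if hz : E.sec h.1 z ∈ E.Ii ∧ E.src (E.sec h.1 z) = z then ⟨E.sec h.1 z, hz⟩
  else ⟨z, unitSpace_subset_Ii z.2, z.2⟩

theorem eventually_transport_val (hopen : IsOpenMap E.src) (hU : U ≤ 𝓝 x) (h : E.LimitIi x U) :
    ∀ᶠ z : E.unitSpace in U, (transport z h).1 = E.sec h.1 z := by
  filter_upwards [h.2.2.2, eventually_src_sec_val hopen hU h.2.1] with z a b
  rw [transport, dif_pos ⟨a, b⟩]

theorem eventually_transport_mul [CommGroup (E.LimitIi x U)]
    [∀ z : E.unitSpace, CommGroup (E.IiFibre z)]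
    (hl : E.IsIsotropyEmbedding x (fun s : E.LimitIi x U => s.1))
    (hc : ∀ z : E.unitSpace, E.IsIsotropyEmbedding z (fun s : E.IiFibre z => s.1))
    (hopen : IsOpenMap E.src) (hU : U ≤ 𝓝 x) (h k : E.LimitIi x U) :
    ∀ᶠ z : E.unitSpace in U, transport z (h * k) = transport z h * transport z k := by
  filter_upwards [eventually_transport_val hopen hU h, eventually_transport_val hopen hU k,
    eventually_transport_val hopen hU (h * k), h.2.eventually_sec_mul hopen hU k.2] with z a b c d
  have e : (h * k).1 = E.mul h.1 k.1 := hl.map_mul h k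
  refine (hc z).inj ?_
  rw [c, e, d, (hc z).map_mul, a, b]

/-- The points of a compact set in a fibre of the source map are finite in number. -/
theorem finite_inter_fibre {K : Set G} (hK : IsCompact K) (x : G) :
    {γ | γ ∈ K ∧ E.src γ = x}.Finite := by
  choose O hO hmem hinj _ using E.etale
  obtain ⟨t, -, ht⟩ := hK.elim_nhds_subcover O fun γ _ => (hO γ).mem_nhds (hmem γ)
  refine (t.finite_toSet.biUnion (t := fun γ => {δ | δ ∈ O γ ∧ E.src δ = x}) fun γ _ =>
    Set.Subsingleton.finite fun a ha b hb =>
      hinj γ ha.1 hb.1 (ha.2.trans hb.2.symm)).subset ?_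
  rintro γ ⟨hγ, hx⟩
  obtain ⟨δ, hδ, hγδ⟩ := Set.mem_iUnion₂.1 (ht hγ)
  exact Set.mem_biUnion hδ ⟨hγδ, hx⟩

/-- Along an ultrafilter, every element of `Ii` in a compact set is near a limit point. -/
theorem eventually_exists_limit [T2Space G] {U : Ultrafilter E.unitSpace}
    (hopen : IsOpenMap E.src) (hU : (U : Filter E.unitSpace) ≤ 𝓝 x) {K : Set G}
    (hK : IsCompact K) :
    ∀ᶠ z : E.unitSpace in (U : Filter E.unitSpace), ∀ γ ∈ K, γ ∈ E.Ii → E.src γ = z →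
      ∃ κ : E.LimitIi x (U : Filter E.unitSpace), κ.1 ∈ K ∧ γ = E.sec κ.1 z := by
  by_contra hcon
  rw [← Ultrafilter.eventually_not] at hcon
  have hcon' : ∀ᶠ z : E.unitSpace in (U : Filter E.unitSpace), ∃ γ, γ ∈ K ∧ γ ∈ E.Ii ∧
      E.src γ = z ∧ ∀ κ : E.LimitIi x (U : Filter E.unitSpace), κ.1 ∈ K → γ ≠ E.sec κ.1 z := by
    filter_upwards [hcon] with z hz
    push Not at hz
    exact hz
  have : Nonempty G := ⟨x⟩
  obtain ⟨u, hu⟩ := hcon'.choice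
  obtain ⟨κ, hκK, hκ⟩ := hK.ultrafilter_le_nhds' (U.map u) (by
    rw [Ultrafilter.mem_map]
    filter_upwards [hu] with z hz using hz.1)
  have hut : Tendsto u (U : Filter E.unitSpace) (𝓝 κ) := hκ
  have hval : Tendsto (fun z : E.unitSpace => (z : G)) (U : Filter E.unitSpace) (𝓝 (x : G)) :=
    (continuous_subtype_val.tendsto x).mono_left hU
  have hsrc : E.src κ = x := by
    refine tendsto_nhds_unique ((E.continuous_src.tendsto κ).comp hut) (hval.congr' ?_)
    filter_upwards [hu] with z hz using hz.2.2.1.symm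
  have hrng : E.rng κ = x := by
    refine tendsto_nhds_unique ((E.continuous_rng.tendsto κ).comp hut) (hval.congr' ?_)
    filter_upwards [hu] with z hz
    exact hz.2.2.1.symm.trans (src_eq_rng_of_mem_Ii hz.2.1)
  have heq := E.eventuallyEq_of_tendsto hut (tendsto_sec_val hopen hU hsrc) (by
    filter_upwards [hu, eventually_src_sec_val hopen hU hsrc] with z hz a
    rw [hz.2.2.1, a])
  have hlim : E.IsLimitIi x (U : Filter E.unitSpace) κ := by
    refine ⟨hsrc, hrng, ?_⟩
    filter_upwards [hu, heq] with z hz a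
    rw [← a]; exact hz.2.1
  obtain ⟨z, hz, hne⟩ := (heq.and hu).exists
  exact hne.2.2.2 ⟨κ, hlim⟩ hκK hz

end Groups

end EtaleGroupoid

namespace GroupAlgebraL2

open MonoidAlgebra Filter Topology

section Pullback

variable {S I : Type*} [DecidableEq I]

/-- The vector of `ℓ²(I)` obtained by pushing an element of `ℂ[S]` along `φ : S → I`. -/
noncomputable def pushVec (φ : S → I) (p : MonoidAlgebra ℂ S) : lp (fun _ : I => ℂ) 2 :=
  Finsupp.linearCombination ℂ (fun s => (lp.single 2 (φ s) (1 : ℂ) : lp (fun _ : I => ℂ) 2)) p.coeff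

variable {φ : S → I}

theorem pushVec_zero : pushVec φ (0 : MonoidAlgebra ℂ S) = 0 := by simp [pushVec]

theorem pushVec_add (p q : MonoidAlgebra ℂ S) :
    pushVec φ (p + q) = pushVec φ p + pushVec φ q := by simp [pushVec]

theorem pushVec_single (s : S) (c : ℂ) :
    pushVec φ (single s c) = c • (lp.single 2 (φ s) (1 : ℂ) : lp (fun _ : I => ℂ) 2) := by
  simp [pushVec]

theorem norm_pushVec (hφ : Function.Injective φ) (p : MonoidAlgebra ℂ S) :
    ‖pushVec φ p‖ = ‖vec p‖ := by
  have h := norm_sq_linearCombination (orthonormal_single.comp φ hφ) p.coeff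
  rw [← norm_vec_sq] at h
  exact (sq_eq_sq₀ (norm_nonneg _) (norm_nonneg _)).1 h

theorem pushVec_apply (hφ : Function.Injective φ) (p : MonoidAlgebra ℂ S) (s : S) :
    pushVec φ p (φ s) = p.coeff s := by
  classical
  induction p using MonoidAlgebra.induction_linear with
  | zero => simp [pushVec_zero]
  | add p q hp hq => simp [pushVec_add, hp, hq]
  | single h c =>
    simp [pushVec_single, Finsupp.single_apply, Pi.single_apply, hφ.eq_iff, eq_comm]

theorem pushVec_apply_of_notMem {i : I} (hi : i ∉ Set.range φ) (p : MonoidAlgebra ℂ S) :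
    pushVec φ p i = 0 := by
  induction p using MonoidAlgebra.induction_linear with
  | zero => simp [pushVec_zero]
  | add p q hp hq => simp [pushVec_add, hp, hq]
  | single h c =>
    have : i ≠ φ h := fun e => hi ⟨h, e.symm⟩
    simp [pushVec_single, this]

theorem norm_vec_le_of_apply_eq (hφ : Function.Injective φ) {q : MonoidAlgebra ℂ S}
    {v : lp (fun _ : I => ℂ) 2} (hv : ∀ s, v (φ s) = q.coeff s) : ‖vec q‖ ≤ ‖v‖ := by
  rw [← norm_pushVec hφ]
  refine lp.norm_mono two_ne_zero fun i => ?_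
  by_cases hi : i ∈ Set.range φ
  · obtain ⟨s, rfl⟩ := hi
    rw [pushVec_apply hφ, hv]
  · rw [pushVec_apply_of_notMem hi, norm_zero]
    exact norm_nonneg _

theorem norm_le_norm_sub_add_norm_vec (hφ : Function.Injective φ) {q : MonoidAlgebra ℂ S}
    {v w : lp (fun _ : I => ℂ) 2} (hv : ∀ i, i ∉ Set.range φ → v i = 0)
    (hw : ∀ s, w (φ s) = q.coeff s) : ‖v‖ ≤ ‖v - w‖ + ‖vec q‖ := by
  have h : ‖v - pushVec φ q‖ ≤ ‖v - w‖ := by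
    refine lp.norm_mono two_ne_zero fun i => ?_
    by_cases hi : i ∈ Set.range φ
    · obtain ⟨s, rfl⟩ := hi
      simp [pushVec_apply hφ, hw]
    · simp only [lp.coeFn_sub, Pi.sub_apply, pushVec_apply_of_notMem hi, hv i hi, sub_zero,
        norm_zero]
      exact norm_nonneg _
  calc ‖v‖ = ‖(v - pushVec φ q) + pushVec φ q‖ := by rw [sub_add_cancel]
    _ ≤ ‖v - pushVec φ q‖ + ‖pushVec φ q‖ := norm_add_le _ _
    _ ≤ _ := by rw [norm_pushVec hφ]; gcongr

theorem map_pushVec_apply [Group S] {T : lp (fun _ : I => ℂ) 2 →L[ℂ] lp (fun _ : I => ℂ) 2}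
    {f : MonoidAlgebra ℂ S}
    (hT : ∀ s t, T (lp.single 2 (φ t) 1) (φ s) = f.coeff (s * t⁻¹)) (p : MonoidAlgebra ℂ S)
    (s : S) : T (pushVec φ p) (φ s) = (f * p).coeff s := by
  induction p using MonoidAlgebra.induction_linear with
  | zero => simp [pushVec_zero]
  | add p q hp hq => simp [pushVec_add, hp, hq, mul_add]
  | single h c =>
    rw [pushVec_single, map_smul, lp.coeFn_smul, Pi.smul_apply, hT, coeff_mul_single_apply,
      smul_eq_mul, mul_comm]

end Pullback

section Blocks

variable {I Q : Type*}

theorem norm_sq_sum_of_inner_eq_zero {ι H : Type*} [NormedAddCommGroup H] [InnerProductSpace ℂ H]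
    (s : Finset ι) (f : ι → H) (h : ∀ i j, i ≠ j → inner ℂ (f i) (f j) = 0) :
    ‖∑ i ∈ s, f i‖ ^ 2 = ∑ i ∈ s, ‖f i‖ ^ 2 := by
  classical
  induction s using Finset.induction_on with
  | empty => simp
  | insert a s ha ih =>
    rw [Finset.sum_insert ha, Finset.sum_insert ha, ← ih, sq, sq, sq]
    refine norm_add_sq_eq_norm_sq_add_norm_sq_of_inner_eq_zero (𝕜 := ℂ) _ _ ?_
    rw [inner_sum]
    exact Finset.sum_eq_zero fun i hi => h _ _ fun e => ha (e ▸ hi)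

theorem inner_eq_zero_of_disjoint {cl : I → Q} {v w : lp (fun _ : I => ℂ) 2} {q r : Q}
    (hqr : q ≠ r) (hv : ∀ i, v i ≠ 0 → cl i = q) (hw : ∀ i, w i ≠ 0 → cl i = r) :
    inner ℂ v w = 0 := by
  rw [lp.inner_eq_tsum]
  refine (tsum_congr fun i => ?_).trans tsum_zero
  by_cases h : v i = 0
  · simp [h]
  · have : w i = 0 := by
      by_contra h'
      exact hqr ((hv i h).symm.trans (hw i h'))
    simp [this]

theorem apply_sum_single_ne_zero [DecidableEq I] {cl : I → Q}
    {T : lp (fun _ : I => ℂ) 2 →L[ℂ] lp (fun _ : I => ℂ) 2}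
    (hT : ∀ i k, T (lp.single 2 i 1) k ≠ 0 → cl k = cl i) {s : Finset I} {c : I → ℂ} {q : Q}
    (hs : ∀ i ∈ s, cl i = q) {k : I}
    (hk : T (∑ i ∈ s, c i • (lp.single 2 i (1 : ℂ) : lp (fun _ : I => ℂ) 2)) k ≠ 0) :
    cl k = q := by
  by_contra hne
  apply hk
  rw [map_sum, lp.coeFn_sum, Finset.sum_apply]
  refine Finset.sum_eq_zero fun i hi => ?_
  rw [map_smul, lp.coeFn_smul, Pi.smul_apply]
  by_cases h : T (lp.single 2 i 1) k = 0
  · rw [h, smul_zero]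
  · exact absurd ((hT i k h).trans (hs i hi)) hne

/-- An operator on `ℓ²(I)` that is block diagonal for the partition `cl` has norm bounded by the
norms of its blocks. -/
theorem opNorm_le_of_blocks [DecidableEq I] (cl : I → Q)
    {T : lp (fun _ : I => ℂ) 2 →L[ℂ] lp (fun _ : I => ℂ) 2}
    (hT : ∀ i k, T (lp.single 2 i 1) k ≠ 0 → cl k = cl i) {M : ℝ} (hM : 0 ≤ M)
    (hb : ∀ (q : Q) (s : Finset I) (c : I → ℂ), (∀ i ∈ s, cl i = q) →
      ‖T (∑ i ∈ s, c i • (lp.single 2 i (1 : ℂ) : lp (fun _ : I => ℂ) 2))‖ ≤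
        M * ‖∑ i ∈ s, c i • (lp.single 2 i (1 : ℂ) : lp (fun _ : I => ℂ) 2)‖) :
    ‖T‖ ≤ M := by
  classical
  have hfin : ∀ (s : Finset I) (c : I → ℂ),
      ‖T (∑ i ∈ s, c i • (lp.single 2 i (1 : ℂ) : lp (fun _ : I => ℂ) 2))‖ ≤
        M * ‖∑ i ∈ s, c i • (lp.single 2 i (1 : ℂ) : lp (fun _ : I => ℂ) 2)‖ := by
    intro s c
    set V : Q → lp (fun _ : I => ℂ) 2 := fun q =>
      ∑ i ∈ s with cl i = q, c i • (lp.single 2 i (1 : ℂ) : lp (fun _ : I => ℂ) 2) with hV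
    have hsum : ∑ i ∈ s, c i • (lp.single 2 i (1 : ℂ) : lp (fun _ : I => ℂ) 2) =
        ∑ q ∈ s.image cl, V q :=
      (Finset.sum_fiberwise_of_maps_to (fun i hi => Finset.mem_image_of_mem cl hi) _).symm
    have hVsupp : ∀ q k, V q k ≠ 0 → cl k = q := fun q k hk =>
      apply_sum_single_ne_zero (T := ContinuousLinearMap.id ℂ _) (cl := cl) (fun i k h => by
        by_contra hne
        have hik : k ≠ i := fun e => hne (e ▸ rfl)
        exact h (by simp [hik])) (fun i hi => (Finset.mem_filter.1 hi).2) hk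
    have hTsupp : ∀ q k, T (V q) k ≠ 0 → cl k = q := fun q k hk =>
      apply_sum_single_ne_zero hT (fun i hi => (Finset.mem_filter.1 hi).2) hk
    have h1 := norm_sq_sum_of_inner_eq_zero (s.image cl) V fun q r hqr =>
      inner_eq_zero_of_disjoint hqr (hVsupp q) (hVsupp r)
    have h2 := norm_sq_sum_of_inner_eq_zero (s.image cl) (fun q => T (V q)) fun q r hqr =>
      inner_eq_zero_of_disjoint hqr (hTsupp q) (hTsupp r)
    rw [hsum, map_sum]
    refine (sq_le_sq₀ (norm_nonneg _) (by positivity)).1 ?_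
    rw [h2, mul_pow, h1, Finset.mul_sum]
    refine Finset.sum_le_sum fun q _ => ?_
    rw [← mul_pow]
    gcongr
    exact hb q _ c fun i hi => (Finset.mem_filter.1 hi).2
  refine T.opNorm_le_bound hM fun v => ?_
  have hv := lp.hasSum_single (p := 2) ENNReal.ofNat_ne_top v
  have hv' : Tendsto (fun s : Finset I =>
      ∑ i ∈ s, v i • (lp.single 2 i (1 : ℂ) : lp (fun _ : I => ℂ) 2)) atTop (𝓝 v) := by
    refine Tendsto.congr (fun s => Finset.sum_congr rfl fun i _ => ?_) hv
    rw [← lp.single_smul, smul_eq_mul, mul_one]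
  exact le_of_tendsto_of_tendsto ((T.continuous.tendsto v).comp hv').norm
    (hv'.norm.const_mul M) (Eventually.of_forall fun s => hfin s v)

end Blocks

end GroupAlgebraL2

namespace EtaleGroupoid

open Filter Topology MonoidAlgebra GroupAlgebraL2

section Fibres

variable {G : Type*} [TopologicalSpace G] {E : EtaleGroupoid G}

/-- If the convolution operator by `g` on the limit group is small, then so are the convolution
operators by `g` on the fibres `Ii z` for `z` near `x`. -/
theorem eventually_norm_vec_fibre_mul_le [T2Space G] {x : E.unitSpace}
    {U : Ultrafilter E.unitSpace} [CommGroup (E.LimitIi x (U : Filter E.unitSpace))]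
    [∀ z : E.unitSpace, CommGroup (E.IiFibre z)]
    (hl : E.IsIsotropyEmbedding x (fun s : E.LimitIi x (U : Filter E.unitSpace) => s.1))
    (hc : ∀ z : E.unitSpace, E.IsIsotropyEmbedding z (fun s : E.IiFibre z => s.1))
    (hopen : IsOpenMap E.src) (hU : (U : Filter E.unitSpace) ≤ 𝓝 x) {g : G → ℂ}
    (hg : Continuous g) (hgK : HasCompactSupport g) {ε : ℝ} (hε : 0 < ε)
    (hf : ∀ f : MonoidAlgebra ℂ (E.LimitIi x (U : Filter E.unitSpace)),
      (∀ κ, f.coeff κ = g κ.1) → ∀ p, ‖vec (f * p)‖ ≤ ε * ‖vec p‖) :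
    ∀ᶠ z : E.unitSpace in (U : Filter E.unitSpace), ∃ k : MonoidAlgebra ℂ (E.IiFibre z),
      (∀ s, k.coeff s = g s.1) ∧ ∀ p, ‖vec (k * p)‖ ≤ 3 * ε * ‖vec p‖ := by
  classical
  have hfin : {κ : E.LimitIi x (U : Filter E.unitSpace) | κ.1 ∈ tsupport g}.Finite :=
    ((finite_inter_fibre (E := E) hgK x).preimage Subtype.val_injective.injOn).subset
      fun κ hκ => ⟨hκ, κ.2.1⟩
  set F := hfin.toFinset with hF
  have memF : ∀ κ, κ ∈ F ↔ κ.1 ∈ tsupport g := fun κ => hfin.mem_toFinset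
  set f : MonoidAlgebra ℂ (E.LimitIi x (U : Filter E.unitSpace)) :=
    ∑ κ ∈ F, single κ (g κ.1) with hfdef
  have hfc : ∀ κ, f.coeff κ = g κ.1 := by
    intro κ
    rw [hfdef, coeff_sum, Finsupp.finsetSum_apply]
    simp only [coeff_single, Finsupp.single_apply, Finset.sum_ite_eq', memF]
    split_ifs with h
    · rfl
    · exact (image_eq_zero_of_notMem_tsupport h).symm
  have hmap := eventually_norm_vec_mapDomain_mul_le
    (q := fun z : E.unitSpace => transport (x := x) (U := (U : Filter E.unitSpace)) z)
    (eventually_transport_mul hl hc hopen hU) hε (by linarith : ε < 2 * ε) (hf f hfc)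
  have htv : ∀ᶠ z : E.unitSpace in (U : Filter E.unitSpace), ∀ κ ∈ F,
      (transport z κ).1 = E.sec κ.1 z :=
    (eventually_all_finset F).2 fun κ _ => eventually_transport_val hopen hU κ
  have hinj : ∀ᶠ z : E.unitSpace in (U : Filter E.unitSpace), ∀ κ ∈ F, ∀ κ' ∈ F, κ ≠ κ' →
      E.sec κ.1 z ≠ E.sec κ'.1 z := by
    refine (eventually_all_finset F).2 fun κ _ => (eventually_all_finset F).2 fun κ' _ => ?_
    by_cases h : κ = κ'
    · exact Eventually.of_forall fun z h' => absurd h h'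
    · have hne : κ.1 ≠ κ'.1 := fun e => h (Subtype.ext e)
      obtain ⟨V, W, hV, hW, hκV, hκW, hVW⟩ := t2_separation hne
      filter_upwards [tendsto_sec_val hopen hU κ.2.1 (hV.mem_nhds hκV),
        tendsto_sec_val hopen hU κ'.2.1 (hW.mem_nhds hκW)] with z hz hz' _
      exact hVW.ne_of_mem hz hz'
  have hsmall : ∀ᶠ z : E.unitSpace in (U : Filter E.unitSpace),
      ∑ κ ∈ F, ‖g (E.sec κ.1 z) - g κ.1‖ < ε := by
    have ht : Tendsto (fun z : E.unitSpace => ∑ κ ∈ F, ‖g (E.sec κ.1 z) - g κ.1‖)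
        (U : Filter E.unitSpace) (𝓝 (∑ κ ∈ F, ‖g κ.1 - g κ.1‖)) :=
      tendsto_finsetSum _ fun κ _ =>
        (((hg.tendsto κ.1).comp (tendsto_sec_val hopen hU κ.2.1)).sub_const _).norm
    refine ht.eventually_lt_const ?_
    simpa using hε
  filter_upwards [hmap, htv, hinj, hsmall, eventually_exists_limit hopen hU hgK] with
    z hmz hvz hiz hsz hez
  refine ⟨∑ κ ∈ F, single (transport z κ) (g (E.sec κ.1 z)), fun s => ?_, fun p => ?_⟩
  · rw [coeff_sum, Finsupp.finsetSum_apply]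
    simp only [coeff_single, Finsupp.single_apply]
    by_cases hs : s.1 ∈ tsupport g
    · obtain ⟨κ, hκ, hsκ⟩ := hez s.1 hs s.2.1 s.2.2
      have hκF := (memF κ).2 hκ
      rw [Finset.sum_eq_single κ]
      · rw [if_pos (Subtype.ext ((hvz κ hκF).trans hsκ.symm)), hsκ]
      · intro κ' hκ' hne
        rw [if_neg]
        intro e
        refine hiz κ' hκ' κ hκF hne ?_
        rw [← hvz κ' hκ', e, hsκ]
      · exact fun h => absurd hκF h
    · rw [image_eq_zero_of_notMem_tsupport hs]
      refine Finset.sum_eq_zero fun κ hκ => ?_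
      split_ifs with e
      · rw [← hvz κ hκ, e, image_eq_zero_of_notMem_tsupport hs]
      · rfl
  · have hsplit : ∑ κ ∈ F, single (transport z κ) (g (E.sec κ.1 z)) =
        ∑ κ ∈ F, single (transport z κ) (g (E.sec κ.1 z) - g κ.1) + mapDomain (transport z) f := by
      have hfm : mapDomain (transport z) f = ∑ κ ∈ F, single (transport z κ) (g κ.1) := by
        change mapDomainLinearMap ℂ ℂ (transport z) f = _
        rw [hfdef, map_sum]
        exact Finset.sum_congr rfl fun κ _ => mapDomainLinearMap_single ..
      rw [hfm, ← Finset.sum_add_distrib]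
      refine Finset.sum_congr rfl fun κ _ => ?_
      rw [← single_add, sub_add_cancel]
    rw [hsplit, add_mul, map_add]
    refine (norm_add_le _ _).trans ?_
    have h1 := norm_vec_sum_single_mul_le F (transport z) (fun κ => g (E.sec κ.1 z) - g κ.1) p
    have h2 := hmz p
    have h3 := mul_le_mul_of_nonneg_right hsz.le (norm_nonneg (vec p))
    linarith

end Fibres

end EtaleGroupoid

namespace EtaleGroupoid

open Filter Topology MonoidAlgebra GroupAlgebraL2

theorem norm_lam_le {G : Type*} [TopologicalSpace G] {E : EtaleGroupoid G}
    {R : Type*} [NormedRing R] [StarRing R] [CStarRing R] [NormedAlgebra ℂ R]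
    [StarModule ℂ R] [CompleteSpace R]
    (lam : ∀ y : E.unitSpace,
      R →⋆ₐ[ℂ] (lp (fun _ : E.Gx y => ℂ) 2 →L[ℂ] lp (fun _ : E.Gx y => ℂ) 2))
    (y : E.unitSpace) (b : R) : ‖lam y b‖ ≤ ‖b‖ := by
  let _ : CStarAlgebra R := {}
  exact NonUnitalStarAlgHom.norm_apply_le (lam y) b

section Model

variable {G : Type*} [TopologicalSpace G] {E : EtaleGroupoid G}
  [∀ y : E.unitSpace, DecidableEq (E.Gx y)]
  {R : Type*} [NormedRing R] [StarRing R] [NormedAlgebra ℂ R]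
  {lam : ∀ y : E.unitSpace,
    R →⋆ₐ[ℂ] (lp (fun _ : E.Gx y => ℂ) 2 →L[ℂ] lp (fun _ : E.Gx y => ℂ) 2)}
  {j : R → G → ℂ} {of : (G → ℂ) → R}

/-- The unit `y` as an element of the fibre `Gy`. -/
abbrev unitPt (y : E.unitSpace) : E.Gx y := ⟨(y : G), y.2⟩

/-- `R` is a model of the reduced C*-algebra of `E`, with regular representations `lam`, inclusion
`of` of `C_c(G)` and evaluation map `j`. -/
structure IsReducedModel
    (lam : ∀ y : E.unitSpace,
      R →⋆ₐ[ℂ] (lp (fun _ : E.Gx y => ℂ) 2 →L[ℂ] lp (fun _ : E.Gx y => ℂ) 2))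
    (j : R → G → ℂ) (of : (G → ℂ) → R) : Prop where
  dense : Dense {a : R | ∃ g : G → ℂ, Continuous g ∧ HasCompactSupport g ∧ a = of g}
  lam_of : ∀ g : G → ℂ, Continuous g → HasCompactSupport g →
    ∀ (y : E.unitSpace) (η γ : E.Gx y),
      (lam y (of g)) (lp.single 2 η 1) γ = g (E.mul γ (E.inv η))
  norm_eq : ∀ a : R, ‖a‖ = ⨆ y : E.unitSpace, ‖lam y a‖
  j_eq : ∀ (a : R) (y : E.unitSpace) (γ : E.Gx y), j a γ = lam y a (lp.single 2 (unitPt y) 1) γ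

namespace IsReducedModel

theorem exists_norm_sub_lt (hM : IsReducedModel lam j of) (b : R) {ε : ℝ} (hε : 0 < ε) :
    ∃ g : G → ℂ, Continuous g ∧ HasCompactSupport g ∧ ‖b - of g‖ < ε := by
  obtain ⟨_, ⟨g, hg, hgK, rfl⟩, h⟩ := Metric.mem_closure_iff.1 (hM.dense b) ε hε
  exact ⟨g, hg, hgK, by rwa [← dist_eq_norm]⟩

theorem j_sub (hM : IsReducedModel lam j of) (a b : R) (γ : G) : j (a - b) γ = j a γ - j b γ := by
  have h := fun b => hM.j_eq b ⟨E.src γ, E.src_mem_unitSpace γ⟩ ⟨γ, rfl⟩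
  simp only at h
  simp [h]

theorem j_of (hM : IsReducedModel lam j of) {g : G → ℂ} (hg : Continuous g)
    (hgK : HasCompactSupport g) (γ : G) : j (of g) γ = g γ := by
  have h := hM.j_eq (of g) ⟨E.src γ, E.src_mem_unitSpace γ⟩ ⟨γ, rfl⟩
  simp only [hM.lam_of g hg hgK, E.inv_of_mem_unitSpace (E.src_mem_unitSpace γ),
    E.mul_src_self] at h
  exact h

theorem norm_le_of_forall (hM : IsReducedModel lam j of) [Nonempty E.unitSpace] {b : R} {C : ℝ}
    (h : ∀ y, ‖lam y b‖ ≤ C) : ‖b‖ ≤ C := by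
  rw [hM.norm_eq]
  exact ciSup_le h

theorem j_star_mul_self (hM : IsReducedModel lam j of) (b : R) (u : E.unitSpace) :
    j (star b * b) u = ((‖lam u b (lp.single 2 (unitPt u) 1)‖ ^ 2 : ℝ) : ℂ) := by
  have h := hM.j_eq (star b * b) u (unitPt u)
  change j (star b * b) u = _ at h
  have h2 : ∀ v : lp (fun _ : E.Gx u => ℂ) 2,
      v (unitPt u) = inner ℂ (lp.single 2 (unitPt u) (1 : ℂ)) v := fun v => by
    rw [lp.inner_single_left]; simp
  rw [h, h2, map_mul, map_star, ContinuousLinearMap.star_eq_adjoint,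
    mul_apply_eq_comp, ContinuousLinearMap.adjoint_inner_right,
    inner_self_eq_norm_sq_to_K]
  push_cast
  rfl

variable [CStarRing R] [StarModule ℂ R] [CompleteSpace R]

theorem norm_lam_single_apply_le (lam : ∀ y : E.unitSpace,
    R →⋆ₐ[ℂ] (lp (fun _ : E.Gx y => ℂ) 2 →L[ℂ] lp (fun _ : E.Gx y => ℂ) 2))
    (y : E.unitSpace) (b : R) (η γ : E.Gx y) : ‖lam y b (lp.single 2 η 1) γ‖ ≤ ‖b‖ := by
  refine (lp.norm_apply_le_norm two_ne_zero _ γ).trans ?_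
  refine ((lam y b).le_of_opNorm_le (norm_lam_le lam y b) _).trans ?_
  rw [lp.norm_single two_pos, norm_one, mul_one]

theorem lam_single_apply (hM : IsReducedModel lam j of) (y : E.unitSpace) (b : R) (η γ : E.Gx y) :
    lam y b (lp.single 2 η 1) γ = j b (E.mul γ (E.inv η)) := by
  have hsrc : E.src (γ : G) = E.src (η : G) := γ.2.trans η.2.symm
  set z : E.unitSpace := ⟨E.rng (η : G), E.rng_mem_unitSpace _⟩ with hz
  set δ : E.Gx z := ⟨E.mul γ (E.inv η), E.src_mul_inv hsrc⟩ with hδ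
  have hjδ := hM.j_eq b z δ
  change j b (E.mul γ (E.inv η)) = _ at hjδ
  rw [hjδ]
  refine eq_of_forall_dist_le fun ε hε => ?_
  obtain ⟨g, hg, hgK, hb⟩ := hM.exists_norm_sub_lt b (half_pos hε)
  have h1 := norm_lam_single_apply_le lam y (b - of g) η γ
  have h2 := norm_lam_single_apply_le lam z (b - of g) (unitPt z) δ
  simp only [map_sub, sub_apply, lp.coeFn_sub, Pi.sub_apply,
    hM.lam_of g hg hgK] at h1 h2
  have h3 : E.mul (δ : G) (E.inv (unitPt z : E.Gx z)) = E.mul γ (E.inv η) := by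
    have hδz : E.src (δ : G) = z := δ.2
    change E.mul (δ : G) (E.inv (z : G)) = _
    rw [E.inv_of_mem_unitSpace z.2]
    have h := E.mul_src_self (δ : G)
    rw [hδz] at h
    exact h
  rw [h3] at h2
  calc dist _ _ ≤ _ := dist_triangle_right _ _ (g (E.mul γ (E.inv η)))
    _ ≤ ε / 2 + ε / 2 := by
      rw [dist_eq_norm, dist_eq_norm]
      exact add_le_add (h1.trans hb.le) (h2.trans hb.le)
    _ = ε := add_halves ε

theorem norm_j_le (hM : IsReducedModel lam j of) (b : R) (γ : G) : ‖j b γ‖ ≤ ‖b‖ := by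
  have h := hM.j_eq b ⟨E.src γ, E.src_mem_unitSpace γ⟩ ⟨γ, rfl⟩
  simp only at h
  rw [h]
  exact norm_lam_single_apply_le lam _ b _ _

theorem continuous_j (hM : IsReducedModel lam j of) (b : R) : Continuous (j b) := by
  refine continuous_of_uniform_approx_of_continuous fun u hu => ?_
  obtain ⟨ε, hε, hεu⟩ := Metric.mem_uniformity_dist.1 hu
  obtain ⟨g, hg, hgK, hb⟩ := hM.exists_norm_sub_lt b hε
  refine ⟨g, hg, fun γ => hεu ?_⟩
  rw [dist_eq_norm, ← hM.j_of hg hgK γ, ← hM.j_sub]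
  exact (hM.norm_j_le _ _).trans_lt hb

/-- The existence of the reduced C*-algebra forces the source map to be open. -/
theorem isOpenMap_src (hM : IsReducedModel lam j of) [T2Space G] [LocallyCompactSpace G] :
    IsOpenMap E.src := by
  refine IsOpenMap.of_nhds_le fun γ V hV => ?_
  obtain ⟨O, hOV, hO, hγO⟩ := mem_nhds_iff.1 (mem_map.1 hV)
  obtain ⟨f, hf1, hf0, hfK, -⟩ := exists_continuous_one_zero_of_isCompact
    (isCompact_singleton (x := γ)) hO.isClosed_compl
    (Set.disjoint_singleton_left.2 fun h => h hγO)
  set g : G → ℂ := fun δ => (f δ : ℂ) with hgdef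
  have hg : Continuous g := Complex.continuous_ofReal.comp f.continuous
  have hgK : HasCompactSupport g := hfK.comp_left Complex.ofReal_zero
  have hentry : ∀ (u : E.unitSpace) (δ : E.Gx u),
      lam u (of g) (lp.single 2 (unitPt u) 1) δ = g δ := fun u δ => by
    rw [← hM.j_eq, hM.j_of hg hgK]
  have hγ : j (star (of g) * of g) (E.src γ) ≠ 0 := by
    have h := hM.j_star_mul_self (of g) ⟨E.src γ, E.src_mem_unitSpace γ⟩
    simp only at h
    rw [h, Complex.ofReal_ne_zero]
    refine pow_ne_zero 2 (norm_ne_zero_iff.2 fun h0 => ?_)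
    have h1 := hentry ⟨E.src γ, E.src_mem_unitSpace γ⟩ ⟨γ, rfl⟩
    rw [h0] at h1
    have h2 : f γ = 1 := hf1 rfl
    simp [hgdef, h2] at h1
  filter_upwards [(hM.continuous_j (star (of g) * of g)).continuousAt.eventually_ne hγ,
    E.isOpen_unitSpace.mem_nhds (E.src_mem_unitSpace γ)] with u hu huG
  have h := hM.j_star_mul_self (of g) ⟨u, huG⟩
  simp only at h
  rw [h, Complex.ofReal_ne_zero] at hu
  by_contra huV
  apply hu
  rw [sq_eq_zero_iff, norm_eq_zero]
  refine lp.ext (funext fun δ => ?_)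
  rw [hentry]
  have hδ : f δ = 0 := hf0 fun hδO => huV (by
    have := hOV hδO
    rwa [Set.mem_preimage, show E.src (δ : G) = u from δ.2] at this)
  simp [hgdef, hδ]

theorem isCompact_unitSpace (hM : IsReducedModel lam j of) [T2Space G] : IsCompact E.unitSpace := by
  obtain ⟨g, hg, hgK, h⟩ := hM.exists_norm_sub_lt 1 one_pos
  have hclosed : IsClosed E.unitSpace := isClosed_eq E.continuous_src continuous_id
  refine hgK.of_isClosed_subset hclosed fun u hu => ?_
  by_contra hcon
  have h1 := hM.j_eq 1 ⟨u, hu⟩ (unitPt ⟨u, hu⟩)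
  simp only [map_one, one_apply_eq_self, lp.single_apply_self] at h1
  have h2 := hM.norm_j_le (1 - of g) u
  rw [hM.j_sub, h1, hM.j_of hg hgK, image_eq_zero_of_notMem_tsupport hcon, sub_zero,
    norm_one] at h2
  linarith

theorem lam_iota_single (hM : IsReducedModel lam j of) {b : R} {d : E.unitSpace → ℂ}
    (hd : ∀ u : E.unitSpace, j b u = d u)
    (hd' : ∀ γ, γ ∉ E.unitSpace → j b γ = 0) (y z : E.unitSpace) (η : E.Gx y)
    (hz : E.rng η = z) : lam y b (lp.single 2 η 1) = d z • lp.single 2 η 1 := by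
  refine lp.ext (funext fun γ => ?_)
  have hsrc : E.src (γ : G) = E.src (η : G) := γ.2.trans η.2.symm
  rw [hM.lam_single_apply, lp.coeFn_smul, Pi.smul_apply]
  by_cases hγ : γ = η
  · subst hγ
    rw [E.mul_inv_self, hz, hd]
    simp
  · rw [hd']
    · simp [hγ]
    · intro hu
      apply hγ
      have h1 : E.src (E.mul γ (E.inv η)) = E.mul γ (E.inv η) := hu
      rw [E.src_mul_inv hsrc] at h1
      have h2 := E.mul_inv_mul_cancel hsrc
      rw [← h1, E.rng_self_mul] at h2
      exact Subtype.ext h2.symm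

end IsReducedModel

end Model

end EtaleGroupoid

namespace EtaleGroupoid

open Filter Topology MonoidAlgebra GroupAlgebraL2

section Orbits

variable {G : Type*} [TopologicalSpace G] {E : EtaleGroupoid G}

/-- The orbit of `η` under left translation by isotropy elements at its range. -/
def orbitMap {z : G} {S : Type*} [Mul S] {c : S → G} (hc : E.IsIsotropyEmbedding z c) {y : G}
    (η : E.Gx y) (hη : E.rng η = z) (s : S) : E.Gx y :=
  ⟨E.mul (c s) η, (E.src_mul _ _ ((hc.src_eq s).trans hη.symm)).trans η.2⟩

theorem rng_orbitMap {z : G} {S : Type*} [Mul S] {c : S → G} (hc : E.IsIsotropyEmbedding z c)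
    {y : G} (η : E.Gx y) (hη : E.rng η = z) (s : S) : E.rng (orbitMap hc η hη s) = z :=
  (E.rng_mul _ _ ((hc.src_eq s).trans hη.symm)).trans (hc.rng_eq s)

theorem orbitMap_injective {z : G} {S : Type*} [Mul S] {c : S → G}
    (hc : E.IsIsotropyEmbedding z c) {y : G} (η : E.Gx y) (hη : E.rng η = z) :
    Function.Injective (orbitMap hc η hη) := by
  intro s t h
  have h' : E.mul (c s) η = E.mul (c t) η := congrArg Subtype.val h
  apply hc.inj
  rw [← E.mul_mul_inv_cancel ((hc.src_eq s).trans hη.symm), h',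
    E.mul_mul_inv_cancel ((hc.src_eq t).trans hη.symm)]

theorem orbitMap_mul {z : G} {S : Type*} [Mul S] {c : S → G} (hc : E.IsIsotropyEmbedding z c)
    {y : G} (η : E.Gx y) (hη : E.rng η = z) (s t : S) :
    (orbitMap hc η hη (s * t) : G) = E.mul (c s) (orbitMap hc η hη t) := by
  change E.mul (c (s * t)) η = E.mul (c s) (E.mul (c t) η)
  rw [hc.map_mul, E.mul_assoc' _ _ _ ((hc.src_eq s).trans (hc.rng_eq t).symm)
    ((hc.src_eq t).trans hη.symm)]

theorem orbitMap_mul_inv {z : G} {S : Type*} [Group S] {c : S → G}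
    (hc : E.IsIsotropyEmbedding z c) {y : G} (η : E.Gx y) (hη : E.rng η = z) (s t : S) :
    E.mul (orbitMap hc η hη s) (E.inv (orbitMap hc η hη t)) = c (s * t⁻¹) := by
  have h := orbitMap_mul hc η hη (s * t⁻¹) t
  rw [inv_mul_cancel_right] at h
  rw [h, E.mul_mul_inv_cancel ((hc.src_eq _).trans (rng_orbitMap hc η hη t).symm)]

/-- The partition of the fibre `Gy` into orbits of `Ii`. -/
def orbitSetoid (hopen : IsOpenMap E.src) (y : G) : Setoid (E.Gx y) where
  r γ η := ∃ u ∈ E.Ii, E.src u = E.rng η ∧ (γ : G) = E.mul u η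
  iseqv :=
    { refl := fun η => ⟨E.rng η, unitSpace_subset_Ii (E.rng_mem_unitSpace _), E.src_rng _,
        (E.rng_self_mul _).symm⟩
      symm := by
        rintro γ η ⟨u, hu, hs, h⟩
        refine ⟨E.inv u, inv_mem_Ii hu, ?_, ?_⟩
        · rw [E.src_inv, h, E.rng_mul _ _ hs]
        · rw [h, E.inv_mul_mul_cancel hs]
      trans := by
        rintro γ η ζ ⟨u, hu, hs, h⟩ ⟨v, hv, hs', h'⟩
        have huv : E.src u = E.rng v := by rw [hs, h', E.rng_mul _ _ hs']
        refine ⟨E.mul u v, mul_mem_Ii hopen hu hv (huv.trans (src_eq_rng_of_mem_Ii hv).symm),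
          ?_, ?_⟩
        · rw [E.src_mul _ _ huv, hs']
        · rw [h, h', E.mul_assoc' _ _ _ huv hs'] }

end Orbits

namespace IsReducedModel

variable {G : Type*} [TopologicalSpace G] {E : EtaleGroupoid G}
  [∀ y : E.unitSpace, DecidableEq (E.Gx y)]
  {R : Type*} [NormedRing R] [StarRing R] [NormedAlgebra ℂ R]
  [CStarRing R] [StarModule ℂ R] [CompleteSpace R]
  {lam : ∀ y : E.unitSpace,
    R →⋆ₐ[ℂ] (lp (fun _ : E.Gx y => ℂ) 2 →L[ℂ] lp (fun _ : E.Gx y => ℂ) 2)}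
  {j : R → G → ℂ} {of : (G → ℂ) → R}

theorem norm_lam_pushVec_le_norm_mul (lam : ∀ y : E.unitSpace,
    R →⋆ₐ[ℂ] (lp (fun _ : E.Gx y => ℂ) 2 →L[ℂ] lp (fun _ : E.Gx y => ℂ) 2))
    {z y : E.unitSpace} {S : Type*} [Mul S]
    {c : S → G} (hc : E.IsIsotropyEmbedding z c) (η : E.Gx y) (hη : E.rng η = z) (b : R)
    (p : MonoidAlgebra ℂ S) :
    ‖lam y b (pushVec (orbitMap hc η hη) p)‖ ≤ ‖b‖ * ‖vec p‖ := by
  rw [← norm_pushVec (orbitMap_injective hc η hη) p]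
  exact (lam y b).le_of_opNorm_le (norm_lam_le lam y b) _

theorem lam_pushVec_apply (hM : IsReducedModel lam j of) {z y : E.unitSpace} {S : Type*} [Group S]
    {c : S → G} (hc : E.IsIsotropyEmbedding z c) (η : E.Gx y) (hη : E.rng η = z) {b : R}
    {f : MonoidAlgebra ℂ S} (hf : ∀ s, f.coeff s = j b (c s)) (p : MonoidAlgebra ℂ S) (s : S) :
    lam y b (pushVec (orbitMap hc η hη) p) (orbitMap hc η hη s) = (f * p).coeff s :=
  map_pushVec_apply (fun s t => by rw [hM.lam_single_apply, orbitMap_mul_inv, hf]) p s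

theorem norm_vec_mul_le (hM : IsReducedModel lam j of) {z y : E.unitSpace} {S : Type*} [Group S]
    {c : S → G} (hc : E.IsIsotropyEmbedding z c) (η : E.Gx y) (hη : E.rng η = z) {b : R}
    {f : MonoidAlgebra ℂ S} (hf : ∀ s, f.coeff s = j b (c s)) (p : MonoidAlgebra ℂ S) :
    ‖vec (f * p)‖ ≤ ‖b‖ * ‖vec p‖ :=
  (norm_vec_le_of_apply_eq (orbitMap_injective hc η hη)
    (hM.lam_pushVec_apply hc η hη hf p)).trans (norm_lam_pushVec_le_norm_mul lam hc η hη b p)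

variable [∀ z : E.unitSpace, CommGroup (E.IiFibre z)]

theorem lam_pushVec_apply_of_notMem (hM : IsReducedModel lam j of) {a : R}
    (ha : ∀ γ, γ ∉ E.Ii → j a γ = 0) {z y : E.unitSpace}
    (hc : E.IsIsotropyEmbedding z (fun s : E.IiFibre z => s.1)) (η : E.Gx y) (hη : E.rng η = z)
    (p : MonoidAlgebra ℂ (E.IiFibre z)) {γ : E.Gx y}
    (hγ : γ ∉ Set.range (orbitMap hc η hη)) :
    lam y a (pushVec (orbitMap hc η hη) p) γ = 0 := by
  induction p using MonoidAlgebra.induction_linear with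
  | zero => simp [pushVec_zero]
  | add p q hp hq => simp [pushVec_add, hp, hq]
  | single s t =>
    rw [pushVec_single, map_smul, lp.coeFn_smul, Pi.smul_apply, hM.lam_single_apply, ha, smul_zero]
    intro hu
    have hsrc : E.src (γ : G) = E.src (orbitMap hc η hη s : G) :=
      γ.2.trans (orbitMap hc η hη s).2.symm
    have hsu := (E.src_mul_inv hsrc).trans (rng_orbitMap hc η hη s)
    refine hγ ⟨⟨_, hu, hsu⟩ * s, Subtype.ext ?_⟩
    rw [orbitMap_mul, E.mul_inv_mul_cancel hsrc]

theorem norm_lam_pushVec_le (hM : IsReducedModel lam j of) {a b : R}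
    (ha : ∀ γ, γ ∉ E.Ii → j a γ = 0) {z y : E.unitSpace}
    (hc : E.IsIsotropyEmbedding z (fun s : E.IiFibre z => s.1)) (η : E.Gx y) (hη : E.rng η = z)
    {k : MonoidAlgebra ℂ (E.IiFibre z)} (hk : ∀ s, k.coeff s = j b s.1)
    (p : MonoidAlgebra ℂ (E.IiFibre z)) :
    ‖lam y a (pushVec (orbitMap hc η hη) p)‖ ≤ ‖a - b‖ * ‖vec p‖ + ‖vec (k * p)‖ := by
  refine (norm_le_norm_sub_add_norm_vec (orbitMap_injective hc η hη)
    (fun γ hγ => hM.lam_pushVec_apply_of_notMem ha hc η hη p hγ)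
    (hM.lam_pushVec_apply hc η hη hk p)).trans ?_
  have h := norm_lam_pushVec_le_norm_mul lam hc η hη (a - b) p
  rw [map_sub, sub_apply] at h
  gcongr

/-- If `j(a)` vanishes off `Ii` and on the fibre at `x`, then the blocks of `a` over units near `x`
are small. -/
theorem eventually_norm_lam_pushVec_le [T2Space G] [LocallyCompactSpace G]
    (hM : IsReducedModel lam j of) (hab : E.IsAbelianIi)
    (hc : ∀ z : E.unitSpace, E.IsIsotropyEmbedding z (fun s : E.IiFibre z => s.1)) {a : R}
    (ha : ∀ γ, γ ∉ E.Ii → j a γ = 0) {x : E.unitSpace}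
    (hax : ∀ γ ∈ E.Ii ∩ E.Gx x, j a γ = 0) {ε : ℝ} (hε : 0 < ε) :
    ∀ᶠ z : E.unitSpace in 𝓝 x, ∀ (y : E.unitSpace) (η : E.Gx y) (hη : E.rng η = z)
      (p : MonoidAlgebra ℂ (E.IiFibre z)),
      ‖lam y a (pushVec (orbitMap (hc z) η hη) p)‖ ≤ 4 * ε * ‖vec p‖ := by
  have hopen := hM.isOpenMap_src
  obtain ⟨g, hg, hgK, hag⟩ := hM.exists_norm_sub_lt a hε
  have hk : ∀ᶠ z : E.unitSpace in 𝓝 x, ∃ k : MonoidAlgebra ℂ (E.IiFibre z),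
      (∀ s, k.coeff s = g s.1) ∧ ∀ p, ‖vec (k * p)‖ ≤ 3 * ε * ‖vec p‖ := by
    refine mem_iff_ultrafilter.2 fun U hU => ?_
    let _ := limitCommGroup hopen hab hU
    have hl := isIsotropyEmbedding_limitIi hopen hab hU
    refine eventually_norm_vec_fibre_mul_le hl hc hopen hU hg hgK hε fun f hf p => ?_
    have hfj : ∀ κ : E.LimitIi x U, f.coeff κ = j (of g - a) κ.1 := fun κ => by
      have hκ : j a κ.1 = 0 := by
        by_cases h : κ.1 ∈ E.Ii
        · exact hax _ ⟨h, κ.2.1⟩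
        · exact ha _ h
      rw [hM.j_sub, hM.j_of hg hgK, hκ, sub_zero, hf]
    refine (hM.norm_vec_mul_le hl (unitPt x) (E.rng_of_mem_unitSpace x.2) hfj p).trans ?_
    rw [norm_sub_rev]
    gcongr
  filter_upwards [hk] with z hz y η hη p
  obtain ⟨k, hkg, hkp⟩ := hz
  have h := hM.norm_lam_pushVec_le (b := of g) ha (hc z) η hη
    (fun s => (hkg s).trans (hM.j_of hg hgK s.1).symm) p
  have h2 := mul_le_mul_of_nonneg_right hag.le (norm_nonneg (vec p))
  linarith [hkp p]

theorem norm_sub_mul_le [Nonempty E.unitSpace] (hM : IsReducedModel lam j of)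
    (hopen : IsOpenMap E.src)
    (hc : ∀ z : E.unitSpace, E.IsIsotropyEmbedding z (fun s : E.IiFibre z => s.1)) {a b : R}
    (ha : ∀ γ, γ ∉ E.Ii → j a γ = 0) {d : E.unitSpace → ℂ}
    (hd : ∀ u : E.unitSpace, j b u = d u) (hd' : ∀ γ, γ ∉ E.unitSpace → j b γ = 0) {M : ℝ}
    (hM0 : 0 ≤ M) (hbound : ∀ (z y : E.unitSpace) (η : E.Gx y) (hη : E.rng η = z)
      (p : MonoidAlgebra ℂ (E.IiFibre z)),
      ‖1 - d z‖ * ‖lam y a (pushVec (orbitMap (hc z) η hη) p)‖ ≤ M * ‖vec p‖) :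
    ‖a - a * b‖ ≤ M := by
  refine hM.norm_le_of_forall fun y => ?_
  let _ := orbitSetoid hopen (y : G)
  have hpush : ∀ (z : E.unitSpace) (η : E.Gx y) (hη : E.rng η = z)
      (p : MonoidAlgebra ℂ (E.IiFibre z)), lam y (a - a * b) (pushVec (orbitMap (hc z) η hη) p) =
        (1 - d z) • lam y a (pushVec (orbitMap (hc z) η hη) p) := by
    intro z η hη p
    induction p using MonoidAlgebra.induction_linear with
    | zero => simp [pushVec_zero]
    | add p q hp hq => rw [pushVec_add, map_add, hp, hq, map_add, smul_add]
    | single s t =>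
      rw [pushVec_single, map_smul, map_sub, map_mul, sub_apply, mul_apply_eq_comp,
        hM.lam_iota_single hd hd' y z _ (rng_orbitMap (hc z) η hη s), map_smul, map_smul, sub_smul,
        one_smul, smul_sub, smul_comm t]
  refine opNorm_le_of_blocks (Q := Quotient (orbitSetoid hopen (y : G))) (fun η => ⟦η⟧)
    (fun η γ h => ?_) hM0 fun q s t hq => ?_
  · set z : E.unitSpace := ⟨E.rng (η : G), E.rng_mem_unitSpace _⟩ with hz
    have hsrc : E.src (γ : G) = E.src (η : G) := γ.2.trans η.2.symm
    refine Quotient.sound ⟨E.mul γ (E.inv η), ?_, E.src_mul_inv hsrc,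
      (E.mul_inv_mul_cancel hsrc).symm⟩
    by_contra hu
    apply h
    rw [map_sub, map_mul, sub_apply, mul_apply_eq_comp, hM.lam_iota_single hd hd' y z η rfl,
      map_smul, lp.coeFn_sub, Pi.sub_apply, lp.coeFn_smul, Pi.smul_apply, hM.lam_single_apply,
      ha _ hu, smul_zero, sub_zero]
  · obtain ⟨η, rfl⟩ := Quotient.exists_rep q
    set z : E.unitSpace := ⟨E.rng (η : G), E.rng_mem_unitSpace _⟩ with hz
    have hη : E.rng (η : G) = z := rfl
    have hex : ∀ i : E.Gx y, ∃ σ : E.IiFibre z, i ∈ s → orbitMap (hc z) η hη σ = i := by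
      intro i
      by_cases hi : i ∈ s
      · obtain ⟨u, hu, hs, h⟩ := Quotient.exact (hq i hi)
        exact ⟨⟨u, hu, hs⟩, fun _ => Subtype.ext h.symm⟩
      · exact ⟨1, fun h => absurd h hi⟩
    choose σ hσ using hex
    have hsum : ∑ i ∈ s, t i • (lp.single 2 i (1 : ℂ) : lp (fun _ : E.Gx y => ℂ) 2) =
        pushVec (orbitMap (hc z) η hη) (∑ i ∈ s, single (σ i) (t i)) := by
      rw [pushVec, coeff_sum, map_sum]
      refine Finset.sum_congr rfl fun i hi => ?_
      rw [coeff_single, Finsupp.linearCombination_single, hσ i hi]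
    rw [hsum, hpush, norm_smul, norm_pushVec (orbitMap_injective (hc z) η hη)]
    exact hbound z y η hη _

end IsReducedModel

end EtaleGroupoid

open EtaleGroupoid in
open scoped ZeroAtInfty in
open Classical in
/-- Theorem 1.1, the correction of [CRST, Lemma 5.2].
The reduced C*-algebra `C*_r(G)` is axiomatised as a C*-algebra `R` together with:
the regular representations `lam y` on `ℓ²(Gy)` for units `y`; a map
`of : C_c(G) → R` with dense range whose images act by the usual convolution
matrix coefficients `⟨λ_y(of g) e_η, e_γ⟩ = g(γη⁻¹)`; the reduced norm condition
`‖a‖ = sup_y ‖λ_y(a)‖`; Renault's `j`-map, `j(a)(γ) = ⟨λ_{s(γ)}(a) e_{s(γ)}, e_γ⟩`;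
and the canonical copy `iota` of `C₀(G⁽⁰⁾)` inside `R`, characterised by
`j(iota d) = d` on `G⁽⁰⁾` and `j(iota d) = 0` off `G⁽⁰⁾`.
With `A = {a : j(a) = 0 off Ii}` and
`J_x = closure {a·iota d : a ∈ A, d ∈ C₀(G⁽⁰⁾), d(x) = 0}`, every `a ∈ A` with
`j(a) = 0 on Ii x` lies in `J_x`. -/
theorem stmt0 {G : Type*} [TopologicalSpace G] [T2Space G] [LocallyCompactSpace G]
    (E : EtaleGroupoid G) (hab : E.IsAbelianIi)
    (R : Type*) [NormedRing R] [StarRing R] [CStarRing R] [NormedAlgebra ℂ R]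
    [StarModule ℂ R] [CompleteSpace R]
    (lam : ∀ y : ↥E.unitSpace,
      R →⋆ₐ[ℂ] (lp (fun _ : ↥(E.Gx ↑y) => ℂ) 2 →L[ℂ] lp (fun _ : ↥(E.Gx ↑y) => ℂ) 2))
    (j : R → G → ℂ)
    (of : (G → ℂ) → R)
    (hdense : Dense {a : R | ∃ g : G → ℂ, Continuous g ∧ HasCompactSupport g ∧ a = of g})
    (hof : ∀ g : G → ℂ, Continuous g → HasCompactSupport g →
      ∀ (y : ↥E.unitSpace) (η γ : ↥(E.Gx ↑y)),
        (lam y (of g)) (lp.single 2 η 1) γ = g (E.mul ↑γ (E.inv ↑η)))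
    (hnorm : ∀ a : R, ‖a‖ = ⨆ y : ↥E.unitSpace, ‖lam y a‖)
    (hj : ∀ (a : R) (y : ↥E.unitSpace) (γ : ↥(E.Gx ↑y)),
      j a ↑γ = (lam y a)
        (lp.single 2 (⟨(y : G), show E.src ↑y = ↑y from y.2⟩ : ↥(E.Gx ↑y)) 1) γ)
    (iota : C₀(↥E.unitSpace, ℂ) → R)
    (hiota1 : ∀ (d : C₀(↥E.unitSpace, ℂ)) (y : ↥E.unitSpace), j (iota d) ↑y = d y)
    (hiota2 : ∀ (d : C₀(↥E.unitSpace, ℂ)) (γ : G), γ ∉ E.unitSpace → j (iota d) γ = 0)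
    (x : ↥E.unitSpace)
    (a : R) (ha : ∀ γ, γ ∉ E.Ii → j a γ = 0)
    (hax : ∀ γ ∈ E.Ii ∩ E.Gx ↑x, j a γ = 0) :
    a ∈ closure {b : R |
      ∃ a' : R, (∀ γ, γ ∉ E.Ii → j a' γ = 0) ∧
      ∃ d : C₀(↥E.unitSpace, ℂ), d x = 0 ∧ b = a' * iota d} := by
  have hM : IsReducedModel (E := E) lam j of := ⟨hdense, hof, hnorm, hj⟩
  have hopen := hM.isOpenMap_src
  let _ := fun z : E.unitSpace => iiCommGroup hopen hab z
  have hc := fun z : E.unitSpace => isIsotropyEmbedding_iiFibre hopen hab z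
  have : Nonempty E.unitSpace := ⟨x⟩
  have : CompactSpace E.unitSpace := isCompact_iff_compactSpace.1 hM.isCompact_unitSpace
  refine Metric.mem_closure_iff.2 fun ε hε => ?_
  obtain ⟨O, hOV, hO, hxO⟩ := mem_nhds_iff.1
    (hM.eventually_norm_lam_pushVec_le hab hc ha hax (ε := ε / 8) (by positivity))
  obtain ⟨f, hf0, hf1, hf⟩ := exists_continuous_zero_one_of_isClosed
    (isClosed_singleton (x := x)) hO.isClosed_compl
    (Set.disjoint_singleton_left.2 fun h => h hxO)
  let d : C₀(E.unitSpace, ℂ) :=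
    { toFun := fun u => (f u : ℂ)
      continuous_toFun := Complex.continuous_ofReal.comp f.continuous
      zero_at_infty' := by simp }
  have hdf : ∀ u, d u = (f u : ℂ) := fun u => rfl
  refine ⟨a * iota d, ⟨a, ha, d, by simp [hdf, hf0 rfl], rfl⟩, ?_⟩
  rw [dist_eq_norm]
  refine (hM.norm_sub_mul_le hopen hc ha (hiota1 d) (hiota2 d) (half_pos hε).le
    fun z y η hη p => ?_).trans_lt (half_lt_self hε)
  have hnonneg : 0 ≤ ε / 2 * ‖GroupAlgebraL2.vec p‖ := by positivity
  by_cases hz : z ∈ O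
  · have h := hOV hz y η hη p
    have h1 : ‖1 - d z‖ ≤ 1 := by
      rw [hdf, ← Complex.ofReal_one, ← Complex.ofReal_sub, Complex.norm_real, Real.norm_eq_abs,
        abs_le]
      constructor <;> linarith [(hf z).1, (hf z).2]
    refine (mul_le_of_le_one_left (norm_nonneg _) h1).trans (h.trans_eq ?_)
    ring
  · have h1 : f z = 1 := hf1 hz
    rw [hdf, h1]
    simpa using hnonneg
end

section
/- Fix g ∈ C_c(G) and x ∈ G⁽⁰⁾. Then there is a finite set 𝔅 of open bisections of G and, for each B ∈ 𝔅, a function g_B ∈ C_c(B) ⊆ C_c(G) (a continuous function with compact support contained in B), such that g = Σ_{B∈𝔅} g_B and such that whenever B, B' ∈ 𝔅 satisfy B ∩ B' ∩ Gx ≠ ∅, then B = B'. -/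
namespace EtaleGroupoid

variable {G : Type*} [TopologicalSpace G] (E : EtaleGroupoid G)

theorem exists_isOpenBisection_mem (γ : G) : ∃ U, E.IsOpenBisection U ∧ γ ∈ U := by
  obtain ⟨U, hUo, hγU, hUinj, -⟩ := E.etale γ
  obtain ⟨V, hVo, hγV, hVinj, -⟩ := E.etale (E.inv γ)
  refine ⟨U ∩ E.inv ⁻¹' V, ⟨hUo.inter (hVo.preimage E.continuous_inv),
    hUinj.mono Set.inter_subset_left, ?_⟩, hγU, hγV⟩
  intro a ha b hb hab
  have hinv : E.inv a = E.inv b := hVinj ha.2 hb.2 (by rw [E.src_inv, E.src_inv, hab])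
  exact hUinj ha.1 hb.1 (by rw [← E.rng_inv, ← E.rng_inv, hinv])

theorem IsOpenBisection.mono {E : EtaleGroupoid G} {U V : Set G} (hU : E.IsOpenBisection U)
    (hV : IsOpen V) (hVU : V ⊆ U) : E.IsOpenBisection V :=
  ⟨hV, hU.2.1.mono hVU, hU.2.2.mono hVU⟩

theorem isClosed_Gx [T1Space G] (x : G) : IsClosed (E.Gx x) :=
  isClosed_singleton.preimage E.continuous_src

/-- Every `γ` has an open bisection neighbourhood meeting the fibre `Gx` at most in `γ`. -/
theorem exists_isOpenBisection_inter_Gx_subset [T1Space G] (x γ : G) :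
    ∃ U, E.IsOpenBisection U ∧ γ ∈ U ∧ U ∩ E.Gx x ⊆ {γ} := by
  obtain ⟨U, hU, hγ⟩ := E.exists_isOpenBisection_mem γ
  by_cases hx : γ ∈ E.Gx x
  · exact ⟨U, hU, hγ, fun δ hδ => hU.2.1 hδ.1 hγ (hδ.2.trans hx.symm)⟩
  · exact ⟨U \ E.Gx x, hU.mono (hU.1.sdiff (E.isClosed_Gx x)) Set.sdiff_subset, ⟨hγ, hx⟩,
      fun δ hδ => (hδ.1.2 hδ.2).elim⟩

end EtaleGroupoid

/-- A compactly supported function is a finite sum of functions supported in the members of a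
finite open cover of its support. -/
theorem HasCompactSupport.exists_sum_of_isOpen_cover {X : Type*} [TopologicalSpace X] [T2Space X]
    [LocallyCompactSpace X] {g : X → ℂ} (hg : Continuous g) (hgc : HasCompactSupport g) {n : ℕ}
    {B : Fin n → Set X} (hB : ∀ i, IsOpen (B i)) (hcover : tsupport g ⊆ ⋃ i, B i) :
    ∃ gB : Fin n → X → ℂ,
      (∀ i, Continuous (gB i) ∧ HasCompactSupport (gB i) ∧ tsupport (gB i) ⊆ B i) ∧
      ∀ y, g y = ∑ i, gB i y := by
  obtain ⟨f, hfB, hf1, -, hfc⟩ := exists_continuous_sum_one_of_isOpen_isCompact hB hgc hcover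
  refine ⟨fun i => ⇑(f i) • g, fun i => ⟨(f i).continuous.smul hg, (hfc i).smul_right,
    (tsupport_smul_subset_left _ _).trans (hfB i)⟩, fun y => ?_⟩
  simp only [Pi.smul_apply', ← Finset.sum_smul]
  by_cases hy : y ∈ tsupport g
  · have h := hf1 hy
    simp only [Finset.sum_apply, Pi.one_apply] at h
    rw [h, one_smul]
  · rw [image_eq_zero_of_notMem_tsupport hy, smul_zero]

open EtaleGroupoid in
/-- Lemma 1.4: `g ∈ C_c(G)` can be written as a finite sum of functions
supported in open bisections such that two bisections of the family meeting over a
common point of `Gx` coincide. -/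
theorem stmt3 {G : Type*} [TopologicalSpace G] [T2Space G] [LocallyCompactSpace G]
    (E : EtaleGroupoid G)
    (g : G → ℂ) (hg : Continuous g) (hgc : HasCompactSupport g)
    (x : G) (hx : x ∈ E.unitSpace) :
    ∃ (n : ℕ) (B : Fin n → Set G) (gB : Fin n → G → ℂ),
      (∀ i, E.IsOpenBisection (B i)) ∧
      (∀ i, Continuous (gB i) ∧ HasCompactSupport (gB i) ∧ tsupport (gB i) ⊆ B i) ∧
      (∀ γ, g γ = ∑ i, gB i γ) ∧
      (∀ i j, (B i ∩ B j ∩ E.Gx x).Nonempty → B i = B j) := by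
  choose U hU hmem hfib using E.exists_isOpenBisection_inter_Gx_subset x
  obtain ⟨t, -, ht⟩ := hgc.elim_nhds_subcover U fun γ _ => (hU γ).1.mem_nhds (hmem γ)
  let e := t.equivFin.symm
  have hcover : tsupport g ⊆ ⋃ i, U (e i) := by
    intro γ hγ
    obtain ⟨δ, hδ, hγδ⟩ := Set.mem_iUnion₂.1 (ht hγ)
    exact Set.mem_iUnion.2 ⟨e.symm ⟨δ, hδ⟩, by simpa using hγδ⟩
  obtain ⟨gB, hgB, hsum⟩ :=
    HasCompactSupport.exists_sum_of_isOpen_cover hg hgc (fun i => (hU (e i)).1) hcover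
  refine ⟨t.card, fun i => U (e i), gB, fun i => hU _, hgB, hsum, ?_⟩
  rintro i j ⟨γ, ⟨hi, hj⟩, hγ⟩
  have hij : (e i : G) = e j := (hfib _ ⟨hi, hγ⟩).symm.trans (hfib _ ⟨hj, hγ⟩)
  simp only [hij]
end

section
/- Let C be an open bisection of G, let g ∈ C_c(G) with supp(g) ⊆ C, and let x ∈ G⁽⁰⁾ be such that supp(g) ∩ Iicl x = ∅. Then there is an open neighbourhood U ⊆ G⁽⁰⁾ of x such that supp°(g)·U ∩ Ii = ∅, where supp°(g)·U := {γ ∈ supp°(g) : s(γ) ∈ U}. -/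
open EtaleGroupoid in
/-- if `supp(g) ⊆ C` misses `Iicl x`, then for some open neighbourhood
`U ⊆ G⁽⁰⁾` of `x` the set `supp°(g)·U = {γ ∈ supp°(g) : s(γ) ∈ U}` misses `Ii`. -/
theorem stmt12 {G : Type*} [TopologicalSpace G] [T2Space G] [LocallyCompactSpace G]
    (E : EtaleGroupoid G) (C : Set G) (hC : E.IsOpenBisection C)
    (g : G → ℂ) (hg : Continuous g) (hgc : HasCompactSupport g)
    (hsupp : tsupport g ⊆ C) (x : G) (hx : x ∈ E.unitSpace)
    (hdisj : tsupport g ∩ (E.Iicl ∩ E.Gx x) = ∅) :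
    ∃ U : Set G, IsOpen U ∧ x ∈ U ∧ U ⊆ E.unitSpace ∧
      ∀ γ ∈ Function.support g, E.src γ ∈ U → γ ∉ E.Ii := by
  have hclosed : IsClosed (E.src '' (tsupport g ∩ E.Iicl)) :=
    ((hgc.isCompact.inter_right isClosed_closure).image E.continuous_src).isClosed
  refine ⟨E.unitSpace \ E.src '' (tsupport g ∩ E.Iicl), E.isOpen_unitSpace.sdiff hclosed,
    ⟨hx, ?_⟩, Set.sdiff_subset, ?_⟩
  · rintro ⟨γ, ⟨hγg, hγI⟩, hγx⟩
    exact (Set.mem_empty_iff_false γ).mp (hdisj ▸ ⟨hγg, hγI, hγx⟩)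
  · intro γ hγ hγU hγI
    exact hγU.2 ⟨γ, ⟨subset_tsupport g hγ, subset_closure hγI⟩, rfl⟩
end
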